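/- (Deterministic/pathwise form of Theorem 1(i).) Fix T > 0. Let q̄ be a (sufficiently smooth) solution of the filtered equation q̄_t + J(ψ̄, q̄) + βψ̄_x = f̄ + νΔq̄ − r q̄ + R, q̄ = Δψ̄, and let Q be a (sufficiently smooth) solution of Q_t + J(Ψ,Q) + βΨ_x = f̄ + νΔQ − rQ + s, Q = ΔΨ, both with zero boundary conditions on ∂D and the same initial condition q̄(·,·,0) = Q(·,·,0) = q̄₀, where R and s are given space-time forcing fields with ∫₀ᵀ ‖s(t)‖² dt ≤ M for some constant M = M(T). Then there is a constant C = C(ν, r, q̄₀, T, M, f̄) > 0 such that for all 0 ≤ t ≤ T, ‖q̄(t) − Q(t)‖² ≤ C ∫₀ᵀ ‖R(t) − s(t)‖² dt. -/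

import Mathlib

open MeasureTheory Real Filter Topology

/-- Partial derivative in the `x` direction. -/
noncomputable def pdx (u : ℝ × ℝ → ℝ) (p : ℝ × ℝ) : ℝ := fderiv ℝ u p (1, 0)

/-- Partial derivative in the `y` direction. -/
noncomputable def pdy (u : ℝ × ℝ → ℝ) (p : ℝ × ℝ) : ℝ := fderiv ℝ u p (0, 1)

/-- The Jacobian operator `J(u,v) = u_x v_y - u_y v_x`. -/
noncomputable def jac (u v : ℝ × ℝ → ℝ) (p : ℝ × ℝ) : ℝ :=
  pdx u p * pdy v p - pdy u p * pdx v p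

/-- The Laplacian `Δu = u_xx + u_yy`. -/
noncomputable def lap (u : ℝ × ℝ → ℝ) (p : ℝ × ℝ) : ℝ :=
  pdx (pdx u) p + pdy (pdy u) p

/-- The squared `L²(D)` norm `‖u‖² = ∫_D u² dxdy`. -/
noncomputable def l2sq (D : Set (ℝ × ℝ)) (u : ℝ × ℝ → ℝ) : ℝ :=
  ∫ p in D, (u p) ^ 2

/-- The `L²(D)` norm. -/
noncomputable def l2norm (D : Set (ℝ × ℝ)) (u : ℝ × ℝ → ℝ) : ℝ :=
  Real.sqrt (l2sq D u)

/-- The squared `L²(D)` norm of the gradient, `‖∇u‖² = ∫_D |∇u|² dxdy`. -/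
noncomputable def gradsq (D : Set (ℝ × ℝ)) (u : ℝ × ℝ → ℝ) : ℝ :=
  ∫ p in D, ((pdx u p) ^ 2 + (pdy u p) ^ 2)

/-- The `L²(D)` norm of the gradient. -/
noncomputable def gradNorm (D : Set (ℝ × ℝ)) (u : ℝ × ℝ → ℝ) : ℝ :=
  Real.sqrt (gradsq D u)

/-- The area `|D|` of the domain. -/
noncomputable def area (D : Set (ℝ × ℝ)) : ℝ := (volume D).toReal

/-- The constant `α = r/2 + πν/|D| - (|β|/2)(|D|/π + 1)`. -/
noncomputable def alphaConst (D : Set (ℝ × ℝ)) (β ν r : ℝ) : ℝ :=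
  r / 2 + π * ν / area D - |β| / 2 * (area D / π + 1)

/-- A space-time field that is smooth jointly in time and space. -/
def SmoothField (u : ℝ → ℝ × ℝ → ℝ) : Prop :=
  ContDiff ℝ (⊤ : ℕ∞) (Function.uncurry u)

/-- A space-time field that is mean-square integrable in space and time
(on the time interval `[0,∞)` and the spatial domain `D`). -/
def MeanSquareIntegrable (D : Set (ℝ × ℝ)) (f : ℝ → ℝ × ℝ → ℝ) : Prop :=
  (∀ t, 0 ≤ t → Integrable (fun p => (f t p) ^ 2) (volume.restrict D)) ∧
  (∀ T, 0 < T → IntervalIntegrable (fun t => l2sq D (f t)) volume 0 T)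

/-- `SolvesBVE D β ν r q ψ f g` says that the vorticity `q`, with streamfunction `ψ`,
solves the barotropic vorticity equation
`q_t + J(ψ,q) + β ψ_x = f + ν Δq - r q + g` on the domain `D` for all times `t ≥ 0`,
with the relation `q = Δψ` and zero boundary conditions `q = 0`, `ψ = 0` on `∂D`.
The extra field `g` is an additional forcing term (e.g. a subgrid-scale stress,
a stochastic parameterization, or `0`). -/
def SolvesBVE (D : Set (ℝ × ℝ)) (β ν r : ℝ) (q ψ f g : ℝ → ℝ × ℝ → ℝ) : Prop :=
  (∀ t, 0 ≤ t → ∀ p ∈ D, q t p = lap (ψ t) p) ∧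
  (∀ t, 0 ≤ t → ∀ p ∈ frontier D, q t p = 0 ∧ ψ t p = 0) ∧
  (∀ t, 0 ≤ t → ∀ p ∈ D,
    deriv (fun s => q s p) t + jac (ψ t) (q t) p + β * pdx (ψ t) p
      = f t p + ν * lap (q t) p - r * q t p + g t p)

/-!
The difference `w = q̄ - Q` satisfies an energy estimate in which the only term that is not
controlled by `‖w‖²` and the forcing is `∫ J(φ, Q) w`, where `φ = ψ̄ - Ψ`. Wente's trilinear
inequality `(∫ J(a, b) c)² ≤ ‖∇a‖² ‖∇b‖² ‖∇c‖²` handles it: `‖∇φ‖ ≤ 2L ‖w‖` by Poincaré if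
`|x| ≤ L` on `D`, `‖∇w‖` is absorbed by the viscosity, and Grönwall applies with a rate affine in
`‖∇Q‖²`, whose time integral is bounded by the energy estimate for `Q` itself.

For compactly supported functions Wente's inequality is Cauchy–Schwarz on the Fourier side: with
frequencies `ξ + η + ζ = 0` one may assume `‖ξ‖ ≤ ‖ζ‖`, the gradients of `a` and `b` absorb the
symbol `ξ × η`, and the area `π ‖ζ‖²` of the disc of admissible `ξ` supplies the gradient of `c`. No
regularity of `∂D` enters the passage to functions vanishing on `∂D`: these are truncated near
their zero set, on which the gradient vanishes almost everywhere.
-/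

open scoped ENNReal SchwartzMap FourierTransform LineDeriv

section GradientOnZeroSet

variable {E : Type*} [NormedAddCommGroup E] [NormedSpace ℝ E]

theorem ae_differentiableAt_of_locallyLipschitz [FiniteDimensional ℝ E] [MeasurableSpace E]
    [BorelSpace E] (μ : Measure E) [μ.IsAddHaarMeasure] {F : Type*} [NormedAddCommGroup F]
    [NormedSpace ℝ F] [FiniteDimensional ℝ F] {f : E → F} (hf : LocallyLipschitz f) :
    ∀ᵐ p ∂μ, DifferentiableAt ℝ f p := by
  refine measure_null_of_locally_null _ fun p _ => ?_
  obtain ⟨K, s, hs, hfs⟩ := hf p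
  have hae : ∀ᵐ q ∂μ, q ∈ interior s → DifferentiableAt ℝ f q := by
    filter_upwards [(hfs.mono interior_subset).ae_differentiableWithinAt_of_mem (μ := μ)]
      with q hq hqs
    exact (hq hqs).differentiableAt (isOpen_interior.mem_nhds hqs)
  refine ⟨_, inter_mem_nhdsWithin _ (interior_mem_nhds.2 hs), measure_mono_null ?_ hae⟩
  exact fun q ⟨hq, hqs⟩ h => hq (h hqs)

theorem fderiv_eq_zero_of_differentiableAt_abs {u : E → ℝ} {p : E} (hp : u p = 0)
    (hd : DifferentiableAt ℝ (fun q => |u q|) p) : fderiv ℝ u p = 0 := by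
  have hmin : IsLocalMin (fun q => |u q|) p := Eventually.of_forall fun q => by simp [hp]
  have habs : HasFDerivAt (fun q => |u q|) (0 : E →L[ℝ] ℝ) p :=
    hmin.fderiv_eq_zero ▸ hd.hasFDerivAt
  refine HasFDerivAt.fderiv ?_
  rw [hasFDerivAt_iff_isLittleO] at habs ⊢
  refine habs.norm_left.congr_left (fun q => ?_) |>.of_norm_left
  simp [hp]

theorem ae_fderiv_eq_zero_of_eq_zero [FiniteDimensional ℝ E] [MeasurableSpace E] [BorelSpace E]
    (μ : Measure E) [μ.IsAddHaarMeasure] {u : E → ℝ} (hu : ContDiff ℝ 1 u) :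
    ∀ᵐ p ∂μ, u p = 0 → fderiv ℝ u p = 0 := by
  filter_upwards [ae_differentiableAt_of_locallyLipschitz μ
    (lipschitzWith_one_norm.locallyLipschitz.comp hu.locallyLipschitz)] with p hd hp
  exact fderiv_eq_zero_of_differentiableAt_abs hp hd

end GradientOnZeroSet

section Truncation

/-- A smooth truncation of the real line, used to cut a function off near its zero set: it vanishes
on `[-1, 1]`, is the identity outside `(-2, 2)`, and has bounded derivative. -/
noncomputable def truncation (x : ℝ) : ℝ :=
  x * Real.smoothTransition (x ^ 2 - 1)

theorem truncation_of_abs_le_one {x : ℝ} (hx : |x| ≤ 1) : truncation x = 0 := by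
  rw [truncation, Real.smoothTransition.zero_of_nonpos, mul_zero]
  linarith [(sq_le_one_iff_abs_le_one x).2 hx]

theorem truncation_of_two_le_abs {x : ℝ} (hx : 2 ≤ |x|) : truncation x = x := by
  rw [truncation, Real.smoothTransition.one_of_one_le, mul_one]
  nlinarith [sq_abs x]

theorem abs_truncation_le (x : ℝ) : |truncation x| ≤ |x| := by
  rw [truncation, abs_mul, abs_of_nonneg (Real.smoothTransition.nonneg _)]
  exact mul_le_of_le_one_right (abs_nonneg x) (Real.smoothTransition.le_one _)

theorem contDiff_truncation {n : ℕ∞} : ContDiff ℝ n truncation :=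
  contDiff_id.mul (Real.smoothTransition.contDiff.comp ((contDiff_id.pow 2).sub contDiff_const))

theorem differentiable_truncation : Differentiable ℝ truncation :=
  (contDiff_truncation (n := 1)).differentiable one_ne_zero

theorem deriv_truncation_of_two_lt_abs {x : ℝ} (hx : 2 < |x|) : deriv truncation x = 1 := by
  have hid : truncation =ᶠ[𝓝 x] id :=
    ((continuous_abs.tendsto x).eventually (lt_mem_nhds hx)).mono
      fun y hy => truncation_of_two_le_abs hy.le
  rw [hid.deriv_eq, deriv_id]

theorem exists_abs_deriv_truncation_le : ∃ K, ∀ x, |deriv truncation x| ≤ K := by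
  obtain ⟨K, hK⟩ := (isCompact_closedBall (0 : ℝ) 2).exists_bound_of_continuousOn
    (contDiff_truncation.continuous_deriv_one).continuousOn
  refine ⟨max K 1, fun x => ?_⟩
  by_cases hx : |x| ≤ 2
  · exact (hK x (by simpa using hx)).trans (le_max_left _ _)
  · rw [deriv_truncation_of_two_lt_abs (not_le.1 hx), abs_one]
    exact le_max_right _ _

end Truncation

section Cutoff

variable {E : Type*} {D : Set E} {u : E → ℝ}

/-- The restriction of `u` to `D`, cut off where `|u| ≤ N⁻¹`. It approximates `u` as `N → ∞`, and if
`u` vanishes on the boundary of `D` it is as smooth on the whole space as `u` is, whatever the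
regularity of that boundary. -/
noncomputable def cutoff (D : Set E) (N : ℝ) (u : E → ℝ) : E → ℝ :=
  D.indicator fun p => N⁻¹ * truncation (N * u p)

theorem abs_cutoff_le (N : ℝ) (p : E) : |cutoff D N u p| ≤ |u p| := by
  refine (norm_indicator_le_norm_self (fun q => N⁻¹ * truncation (N * u q)) p).trans ?_
  rw [norm_mul, norm_inv, Real.norm_eq_abs, Real.norm_eq_abs]
  calc |N|⁻¹ * |truncation (N * u p)| ≤ |N|⁻¹ * |N * u p| :=
        mul_le_mul_of_nonneg_left (abs_truncation_le _) (by positivity)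
    _ = (|N|⁻¹ * |N|) * |u p| := by rw [abs_mul, mul_assoc]
    _ ≤ |u p| := mul_le_of_le_one_left (abs_nonneg _) inv_mul_le_one

theorem hasCompactSupport_cutoff [PseudoMetricSpace E] [ProperSpace E]
    (hD : Bornology.IsBounded D) (N : ℝ) :
    HasCompactSupport (cutoff D N u) :=
  .intro hD.isCompact_closure fun _ hp =>
    Set.indicator_of_notMem (fun h => hp (subset_closure h)) _

theorem cutoff_eventuallyEq_of_mem [TopologicalSpace E] (hD : IsOpen D) (N : ℝ) {p : E}
    (hp : p ∈ D) :
    cutoff D N u =ᶠ[𝓝 p] fun q => N⁻¹ * truncation (N * u q) :=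
  (Set.eqOn_indicator (s := D)).eventuallyEq_of_mem (hD.mem_nhds hp)

theorem cutoff_eventuallyEq_zero [TopologicalSpace E] (hD : IsOpen D) (hu : Continuous u)
    (hu0 : ∀ p ∈ frontier D, u p = 0) (N : ℝ) {p : E} (hp : p ∉ D) :
    cutoff D N u =ᶠ[𝓝 p] 0 := by
  by_cases hpD : p ∈ closure D
  · have hup : u p = 0 := hu0 p ⟨hpD, by rwa [hD.interior_eq]⟩
    have hsmall : ∀ᶠ q in 𝓝 p, |N * u q| < 1 :=
      (continuous_const.mul hu).abs.continuousAt.eventually_lt continuousAt_const (by simp [hup])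
    filter_upwards [hsmall] with q hq
    exact Set.indicator_apply_eq_zero.2 fun _ => by
      rw [truncation_of_abs_le_one hq.le, mul_zero]
  · filter_upwards [isClosed_closure.isOpen_compl.mem_nhds hpD] with q hq
    exact Set.indicator_of_notMem (fun h => hq (subset_closure h)) _

variable [NormedAddCommGroup E] [NormedSpace ℝ E]

/-- The value of `u` at `p` together with its gradient there. -/
noncomputable def jet (u : E → ℝ) (p : E) : (E →L[ℝ] ℝ) × ℝ := (fderiv ℝ u p, u p)

theorem continuous_jet (hu : ContDiff ℝ 1 u) : Continuous (jet u) :=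
  (hu.continuous_fderiv one_ne_zero).prodMk hu.continuous

theorem contDiff_cutoff (hD : IsOpen D) {n : ℕ∞} (hu : ContDiff ℝ n u)
    (hu0 : ∀ p ∈ frontier D, u p = 0) (N : ℝ) : ContDiff ℝ n (cutoff D N u) := by
  refine contDiff_iff_contDiffAt.2 fun p => ?_
  by_cases hp : p ∈ D
  · exact (contDiff_const.mul (contDiff_truncation.comp (contDiff_const.mul hu))).contDiffAt
      |>.congr_of_eventuallyEq (cutoff_eventuallyEq_of_mem hD N hp)
  · exact contDiffAt_const.congr_of_eventuallyEq
      (cutoff_eventuallyEq_zero hD hu.continuous hu0 N hp)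

theorem fderiv_cutoff_of_mem (hD : IsOpen D) (hu : Differentiable ℝ u) (N : ℝ) {p : E}
    (hp : p ∈ D) :
    fderiv ℝ (cutoff D N u) p = deriv truncation (N * u p) • fderiv ℝ u p := by
  rcases eq_or_ne N 0 with rfl | hN
  · have h0 : deriv truncation 0 = 0 := by
      have hid : truncation =ᶠ[𝓝 0] 0 := by
        filter_upwards [Metric.closedBall_mem_nhds (0 : ℝ) one_pos] with x hx
        exact truncation_of_abs_le_one (by simpa using hx)
      simpa using hid.deriv_eq
    rw [(cutoff_eventuallyEq_of_mem hD 0 hp).fderiv_eq]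
    simp [h0]
  · have h : HasFDerivAt (fun q => truncation (N * u q))
        (deriv truncation (N * u p) • N • fderiv ℝ u p) p :=
      HasDerivAt.comp_hasFDerivAt (h₂ := truncation) p (differentiable_truncation _).hasDerivAt
        ((hu p).hasFDerivAt.const_mul N)
    rw [(cutoff_eventuallyEq_of_mem hD N hp).fderiv_eq, (h.const_mul N⁻¹).fderiv, smul_smul,
      smul_smul]
    congr 1
    field_simp

theorem jet_cutoff_of_notMem (hD : IsOpen D) (hu : Continuous u)
    (hu0 : ∀ p ∈ frontier D, u p = 0) (N : ℝ) {p : E} (hp : p ∉ D) : jet (cutoff D N u) p = 0 := by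
  have h := cutoff_eventuallyEq_zero hD hu hu0 N hp
  rw [jet, h.fderiv_eq, h.eq_of_nhds]
  simp

theorem exists_norm_jet_cutoff_le [ProperSpace E] (hD : IsOpen D) (hDb : Bornology.IsBounded D)
    (hu : ContDiff ℝ 1 u) (hu0 : ∀ p ∈ frontier D, u p = 0) :
    ∃ C, ∀ N p, ‖jet (cutoff D N u) p‖ ≤ C := by
  obtain ⟨K, hK⟩ := exists_abs_deriv_truncation_le
  obtain ⟨C, hC⟩ :=
    hDb.isCompact_closure.exists_bound_of_continuousOn (continuous_jet hu).continuousOn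
  refine ⟨max (K * C) (max C 0), fun N p => ?_⟩
  by_cases hp : p ∈ D
  · have hCp := max_le_iff.1 (hC p (subset_closure hp))
    refine max_le ?_ ?_
    · rw [jet, fderiv_cutoff_of_mem hD (hu.differentiable one_ne_zero) N hp, norm_smul]
      exact le_max_of_le_left
        (mul_le_mul (hK _) hCp.1 (norm_nonneg _) ((abs_nonneg _).trans (hK 0)))
    · exact le_max_of_le_right (le_max_of_le_left ((abs_cutoff_le N p).trans hCp.2))
  · rw [jet_cutoff_of_notMem hD hu.continuous hu0 N hp, norm_zero]
    exact le_max_of_le_right (le_max_right _ _)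

theorem jet_cutoff_eventuallyEq (hD : IsOpen D) (hu : Differentiable ℝ u) {p : E} (hp : p ∈ D)
    (hup : u p ≠ 0) : ∀ᶠ N in atTop, jet (cutoff D N u) p = jet u p := by
  filter_upwards [eventually_gt_atTop (2 / |u p|)] with N hN
  have hN0 : 0 < N := (by positivity : 0 ≤ 2 / |u p|).trans_lt hN
  have h2 : 2 < |N * u p| := by
    rwa [abs_mul, abs_of_pos hN0, ← div_lt_iff₀ (abs_pos.2 hup)]
  have hval : cutoff D N u p = u p := by
    rw [cutoff, Set.indicator_of_mem hp, truncation_of_two_le_abs h2.le,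
      inv_mul_cancel_left₀ hN0.ne']
  rw [jet, fderiv_cutoff_of_mem hD hu N hp, deriv_truncation_of_two_lt_abs h2, one_smul, hval, jet]

theorem ae_tendsto_jet_cutoff [FiniteDimensional ℝ E] [MeasurableSpace E] [BorelSpace E]
    (μ : Measure E) [μ.IsAddHaarMeasure] (hD : IsOpen D) (hu : ContDiff ℝ 1 u) :
    ∀ᵐ p ∂μ, p ∈ D → Tendsto (fun N => jet (cutoff D N u) p) atTop (𝓝 (jet u p)) := by
  have hud := hu.differentiable one_ne_zero
  filter_upwards [ae_fderiv_eq_zero_of_eq_zero μ hu] with p hgrad hp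
  by_cases hup : u p = 0
  · have hval (N : ℝ) : cutoff D N u p = 0 := by
      simpa [hup] using abs_cutoff_le (D := D) (u := u) N p
    simp only [jet, fderiv_cutoff_of_mem hD hud _ hp, hgrad hup, smul_zero, hval, hup]
    exact tendsto_const_nhds
  · exact tendsto_nhds_of_eventually_eq (jet_cutoff_eventuallyEq hD hud hp hup)

end Cutoff

theorem tendsto_integral_comp_of_forall_norm_le {α X ι : Type*} [MeasurableSpace α] {μ : Measure α}
    [NormedAddCommGroup X] [ProperSpace X] {l : Filter ι} [l.IsCountablyGenerated] {D : Set α}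
    (hD : MeasurableSet D) (hμ : μ D ≠ ∞) {z : ι → α → X} {w : α → X} {C : ℝ} {Φ : X → ℝ}
    (hΦ : Continuous Φ) (hΦ0 : Φ 0 = 0) (hz : ∀ i, AEStronglyMeasurable (z i) μ)
    (hzC : ∀ i p, ‖z i p‖ ≤ C) (hz0 : ∀ i, ∀ p ∉ D, z i p = 0)
    (hzw : ∀ᵐ p ∂μ, p ∈ D → Tendsto (fun i => z i p) l (𝓝 (w p))) :
    Tendsto (fun i => ∫ p, Φ (z i p) ∂μ) l (𝓝 (∫ p in D, Φ (w p) ∂μ)) := by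
  obtain ⟨M, hM⟩ := (isCompact_closedBall (0 : X) C).exists_bound_of_continuousOn hΦ.continuousOn
  have hset (i : ι) : ∫ p, Φ (z i p) ∂μ = ∫ p in D, Φ (z i p) ∂μ :=
    (setIntegral_eq_integral_of_forall_compl_eq_zero fun p hp => by rw [hz0 i p hp, hΦ0]).symm
  simp only [hset]
  refine tendsto_integral_filter_of_dominated_convergence (fun _ => M)
    (.of_forall fun i => hΦ.comp_aestronglyMeasurable (hz i).restrict)
    (.of_forall fun i => .of_forall fun p => hM _ (mem_closedBall_zero_iff.2 (hzC i p)))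
    (integrableOn_const hμ) ?_
  filter_upwards [(ae_restrict_iff' hD).2 hzw] with p hp
  exact (hΦ.tendsto _).comp hp

theorem tendsto_integral_comp_jet_cutoff {ι E : Type*} [Finite ι] [NormedAddCommGroup E]
    [NormedSpace ℝ E] [FiniteDimensional ℝ E] [MeasurableSpace E] [BorelSpace E] (μ : Measure E)
    [μ.IsAddHaarMeasure] {D : Set E} (hD : IsOpen D) (hDb : Bornology.IsBounded D)
    {u : ι → E → ℝ} (hu : ∀ i, ContDiff ℝ 1 (u i)) (hu0 : ∀ i, ∀ p ∈ frontier D, u i p = 0)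
    {Φ : (ι → (E →L[ℝ] ℝ) × ℝ) → ℝ} (hΦ : Continuous Φ) (hΦ0 : Φ 0 = 0) :
    Tendsto (fun N : ℝ => ∫ p, Φ (fun i => jet (cutoff D N (u i)) p) ∂μ) atTop
      (𝓝 (∫ p in D, Φ (fun i => jet (u i) p) ∂μ)) := by
  cases nonempty_fintype ι
  have : ProperSpace E := FiniteDimensional.proper ℝ E
  have : ProperSpace (E →L[ℝ] ℝ) := FiniteDimensional.proper ℝ _
  choose C hC using fun i => exists_norm_jet_cutoff_le hD hDb (hu i) (hu0 i)
  have hcont (N : ℝ) : Continuous fun p i => jet (cutoff D N (u i)) p :=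
    continuous_pi fun i => continuous_jet (contDiff_cutoff hD (hu i) (hu0 i) N)
  refine tendsto_integral_comp_of_forall_norm_le (C := ∑ i, C i) hD.measurableSet
    hDb.measure_lt_top.ne hΦ hΦ0
    (fun N => (hcont N).aestronglyMeasurable) (fun N p => ?_) (fun N p hp => ?_) ?_
  · exact (pi_norm_le_iff_of_nonneg
      (Finset.sum_nonneg fun i _ => (norm_nonneg _).trans (hC i 0 0))).2 fun i =>
      (hC i N p).trans (Finset.single_le_sum (f := C)
        (fun i _ => (norm_nonneg _).trans (hC i 0 0)) (Finset.mem_univ i))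
  · exact funext fun i => jet_cutoff_of_notMem hD (hu i).continuous (hu0 i) N hp
  · filter_upwards [ae_all_iff.2 fun i => ae_tendsto_jet_cutoff μ hD (hu i)] with p h hp
    exact tendsto_pi_nhds.2 fun i => h i hp

theorem integral_fderiv_apply_eq_zero_of_hasCompactSupport {E : Type*} [NormedAddCommGroup E]
    [NormedSpace ℝ E] [FiniteDimensional ℝ E] [MeasurableSpace E] [BorelSpace E] (μ : Measure E)
    [μ.IsAddHaarMeasure] {u : E → ℝ} (hu : ContDiff ℝ 1 u) (huc : HasCompactSupport u) (e : E) :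
    ∫ p, fderiv ℝ u p e ∂μ = 0 := by
  have hcont : Continuous fun p => fderiv ℝ u p e := by
    have := hu.continuous_fderiv one_ne_zero
    fun_prop
  have h := integral_mul_fderiv_eq_neg_fderiv_mul_of_integrable (μ := μ) (f := fun _ : E => (1 : ℝ))
    (g := u) (v := e) (by simp)
    (by simpa using hcont.integrable_of_hasCompactSupport (huc.fderiv_apply ℝ e))
    (by simpa using hu.continuous.integrable_of_hasCompactSupport huc)
    (fun _ _ => differentiableAt_const _) fun _ _ => hu.differentiable one_ne_zero _
  simpa using h

theorem setIntegral_fderiv_eq_zero {E : Type*} [NormedAddCommGroup E]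
    [NormedSpace ℝ E] [FiniteDimensional ℝ E] [MeasurableSpace E] [BorelSpace E] (μ : Measure E)
    [μ.IsAddHaarMeasure] {D : Set E} (hD : IsOpen D) (hDb : Bornology.IsBounded D) {u : E → ℝ}
    (hu : ContDiff ℝ 1 u) (hu0 : ∀ p ∈ frontier D, u p = 0) (e : E) :
    ∫ p in D, fderiv ℝ u p e ∂μ = 0 := by
  have : ProperSpace E := FiniteDimensional.proper ℝ E
  have hlim := tendsto_integral_comp_jet_cutoff μ hD hDb (u := fun _ : Unit => u) (fun _ => hu)
    (fun _ => hu0) (Φ := fun z => (z ()).1 e) (by fun_prop) (by simp)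
  refine tendsto_nhds_unique hlim (tendsto_const_nhds.congr fun N => ?_)
  exact (integral_fderiv_apply_eq_zero_of_hasCompactSupport μ (contDiff_cutoff hD hu hu0 N)
    (hasCompactSupport_cutoff hDb N) e).symm

section FourierTrilinear

theorem sq_lintegral_mul_le {α : Type*} [MeasurableSpace α] (μ : Measure α) {f g : α → ℝ≥0∞}
    (hf : AEMeasurable f μ) (hg : AEMeasurable g μ) :
    (∫⁻ a, f a * g a ∂μ) ^ 2 ≤ (∫⁻ a, f a ^ 2 ∂μ) * ∫⁻ a, g a ^ 2 ∂μ := by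
  have hsq (x : ℝ≥0∞) : (x ^ (1 / 2 : ℝ)) ^ 2 = x := by
    rw [← ENNReal.rpow_natCast, ← ENNReal.rpow_mul]
    norm_num
  have h := pow_le_pow_left'
    (ENNReal.lintegral_mul_le_Lp_mul_Lq μ Real.HolderConjugate.two_two hf hg) 2
  simpa only [mul_pow, hsq, ENNReal.rpow_two, Pi.mul_apply] using h

/-- The square of the weighted norm `‖ |ξ| a ‖` in `L²(ℂ)`. On the Fourier side this is the
Dirichlet integral, up to a constant. -/
noncomputable def weightSq (a : ℂ → ℝ≥0∞) : ℝ≥0∞ := ∫⁻ ξ, (‖ξ‖ₑ * a ξ) ^ 2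

/-- The integrand of the trilinear form `∫ J(f, g) h` on the Fourier side, where `a`, `b`, `c` stand
for the moduli of the three Fourier transforms. The Jacobian becomes the planar cross product. -/
noncomputable def crossIntegrand (a b c : ℂ → ℝ≥0∞) (p : ℂ × ℂ) : ℝ≥0∞ :=
  ‖p.1.re * p.2.im - p.1.im * p.2.re‖ₑ * (a p.1 * b p.2 * c (-(p.1 + p.2)))

theorem enorm_cross_le (ξ η : ℂ) : ‖ξ.re * η.im - ξ.im * η.re‖ₑ ≤ ‖ξ‖ₑ * ‖η‖ₑ := by
  have hcross : ξ.re * η.im - ξ.im * η.re = (starRingEnd ℂ ξ * η).im := by simp; ring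
  rw [hcross, ← RCLike.enorm_conj ξ, ← enorm_mul, enorm_le_iff_norm_le]
  exact Complex.abs_im_le_norm _

theorem volume_closedBall_zero_norm (ξ : ℂ) :
    volume (Metric.closedBall (0 : ℂ) ‖ξ‖) = ENNReal.ofReal π * ‖ξ‖ₑ ^ 2 := by
  rw [Complex.volume_closedBall, ofReal_norm, ← NNReal.coe_real_pi, ENNReal.ofReal_coe_nnreal,
    mul_comm]

theorem measurableSet_norm_le : MeasurableSet {p : ℂ × ℂ | ‖p.1‖ ≤ ‖p.2‖} :=
  measurableSet_le (by fun_prop) (by fun_prop)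

theorem setLIntegral_norm_le (c : ℂ → ℝ≥0∞) (hc : Measurable c) :
    ∫⁻ p in {p : ℂ × ℂ | ‖p.1‖ ≤ ‖p.2‖}, c p.2 ^ 2 = ENNReal.ofReal π * weightSq c := by
  rw [← lintegral_indicator measurableSet_norm_le, Measure.volume_eq_prod,
    lintegral_prod_symm' _ (Measurable.indicator (by fun_prop) measurableSet_norm_le), weightSq,
    ← lintegral_const_mul' _ _ ENNReal.ofReal_ne_top]
  refine lintegral_congr fun ζ => ?_
  have hslice : (fun ξ => {p : ℂ × ℂ | ‖p.1‖ ≤ ‖p.2‖}.indicator (fun p => c p.2 ^ 2) (ξ, ζ))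
      = (Metric.closedBall (0 : ℂ) ‖ζ‖).indicator fun _ => c ζ ^ 2 := by
    ext ξ
    simp [Set.indicator]
  rw [hslice, lintegral_indicator_const Metric.isClosed_closedBall.measurableSet,
    volume_closedBall_zero_norm]
  ring

theorem measurePreserving_prod_neg_add :
    MeasurePreserving (fun p : ℂ × ℂ => (p.1, -(p.1 + p.2))) :=
  ((MeasurePreserving.id volume).prod (Measure.measurePreserving_neg volume)).comp
    (measurePreserving_prod_add volume volume)

theorem measurePreserving_neg_add_prod :
    MeasurePreserving (fun p : ℂ × ℂ => (-(p.1 + p.2), p.2)) :=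
  ((Measure.measurePreserving_neg volume).prod (MeasurePreserving.id volume)).comp
    (measurePreserving_add_prod volume volume)

variable {a b c : ℂ → ℝ≥0∞}

theorem measurable_crossIntegrand (ha : Measurable a) (hb : Measurable b) (hc : Measurable c) :
    Measurable (crossIntegrand a b c) := by
  unfold crossIntegrand
  fun_prop

theorem measurableSet_norm_le_norm_add : MeasurableSet {p : ℂ × ℂ | ‖p.1‖ ≤ ‖p.1 + p.2‖} :=
  measurableSet_le (by fun_prop) (by fun_prop)

theorem crossIntegrand_neg_add (p : ℂ × ℂ) :
    crossIntegrand c b a (-(p.1 + p.2), p.2) = crossIntegrand a b c p := by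
  have hcross : (-(p.1 + p.2)).re * p.2.im - (-(p.1 + p.2)).im * p.2.re
      = -(p.1.re * p.2.im - p.1.im * p.2.re) := by
    simp only [Complex.neg_re, Complex.neg_im, Complex.add_re, Complex.add_im]
    ring
  have hfst : -(-(p.1 + p.2) + p.2) = p.1 := by ring
  rw [crossIntegrand, crossIntegrand, hcross, hfst, enorm_neg]
  ring

theorem sq_setLIntegral_crossIntegrand_le (ha : Measurable a) (hb : Measurable b)
    (hc : Measurable c) :
    (∫⁻ p in {p : ℂ × ℂ | ‖p.1‖ ≤ ‖p.1 + p.2‖}, crossIntegrand a b c p) ^ 2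
      ≤ ENNReal.ofReal π * (weightSq a * weightSq b * weightSq c) := by
  set S := {p : ℂ × ℂ | ‖p.1‖ ≤ ‖p.1 + p.2‖} with hS
  have hab : ∫⁻ p : ℂ × ℂ, ((‖p.1‖ₑ * a p.1) * (‖p.2‖ₑ * b p.2)) ^ 2 = weightSq a * weightSq b := by
    simp only [mul_pow _ (‖_‖ₑ * b _)]
    exact lintegral_prod_mul (f := fun ξ => (‖ξ‖ₑ * a ξ) ^ 2) (g := fun η => (‖η‖ₑ * b η) ^ 2)
      (by fun_prop) (by fun_prop)
  have hcS : ∫⁻ p in S, c (-(p.1 + p.2)) ^ 2 = ENNReal.ofReal π * weightSq c := by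
    rw [← setLIntegral_norm_le c hc, ← measurePreserving_prod_neg_add.setLIntegral_comp_preimage
      measurableSet_norm_le (by fun_prop)]
    simp only [Set.preimage_ofPred_eq, norm_neg, hS]
  calc (∫⁻ p in S, crossIntegrand a b c p) ^ 2
      ≤ (∫⁻ p in S, ((‖p.1‖ₑ * a p.1) * (‖p.2‖ₑ * b p.2)) * c (-(p.1 + p.2))) ^ 2 := by
        refine pow_le_pow_left' (lintegral_mono fun p => ?_) 2
        refine (mul_le_mul_left (enorm_cross_le p.1 p.2) _).trans_eq ?_
        ring
    _ ≤ (∫⁻ p in S, ((‖p.1‖ₑ * a p.1) * (‖p.2‖ₑ * b p.2)) ^ 2) * ∫⁻ p in S, c (-(p.1 + p.2)) ^ 2 :=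
        sq_lintegral_mul_le _ (by fun_prop) (by fun_prop)
    _ ≤ (weightSq a * weightSq b) * (ENNReal.ofReal π * weightSq c) := by
        rw [hcS, ← hab]
        exact mul_le_mul_left (setLIntegral_le_lintegral _ _) _
    _ = _ := by ring

-- One of the frequencies `ξ` and `-(ξ + η)` has norm at most that of the other; the involution
-- exchanging them reduces the second case to the first.
theorem sq_lintegral_crossIntegrand_le (ha : Measurable a) (hb : Measurable b)
    (hc : Measurable c) :
    (∫⁻ p, crossIntegrand a b c p) ^ 2
      ≤ 4 * ENNReal.ofReal π * (weightSq a * weightSq b * weightSq c) := by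
  set S := {p : ℂ × ℂ | ‖p.1‖ ≤ ‖p.1 + p.2‖} with hS
  set B := ENNReal.ofReal π * (weightSq a * weightSq b * weightSq c) with hB
  have hcover : S ∪ (fun p : ℂ × ℂ => (-(p.1 + p.2), p.2)) ⁻¹' S = Set.univ := by
    ext p
    have hfst : -(p.1 + p.2) + p.2 = -p.1 := by ring
    simpa [hS, hfst, -neg_add_rev] using le_total ‖p.1‖ ‖p.1 + p.2‖
  have hswap : ∫⁻ p in (fun p : ℂ × ℂ => (-(p.1 + p.2), p.2)) ⁻¹' S, crossIntegrand a b c p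
      = ∫⁻ p in S, crossIntegrand c b a p := by
    rw [← measurePreserving_neg_add_prod.setLIntegral_comp_preimage
      measurableSet_norm_le_norm_add (measurable_crossIntegrand hc hb ha)]
    simp only [crossIntegrand_neg_add]
    rfl
  have hlow : (∫⁻ p in S, crossIntegrand a b c p) ^ 2 ≤ B :=
    sq_setLIntegral_crossIntegrand_le ha hb hc
  have hhigh : (∫⁻ p in S, crossIntegrand c b a p) ^ 2 ≤ B :=
    (sq_setLIntegral_crossIntegrand_le hc hb ha).trans_eq (by rw [hB]; ring)
  calc (∫⁻ p, crossIntegrand a b c p) ^ 2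
      ≤ ((∫⁻ p in S, crossIntegrand a b c p) + ∫⁻ p in S, crossIntegrand c b a p) ^ 2 := by
        refine pow_le_pow_left' ?_ 2
        rw [← hswap, ← setLIntegral_univ, ← hcover]
        exact lintegral_union_le _ _ _
    _ ≤ 2 * ((∫⁻ p in S, crossIntegrand a b c p) ^ 2
        + (∫⁻ p in S, crossIntegrand c b a p) ^ 2) := by
        simpa [show (2 : ℝ) - 1 = 1 by norm_num] using ENNReal.rpow_add_le_mul_rpow_add_rpow
          (∫⁻ p in S, crossIntegrand a b c p) (∫⁻ p in S, crossIntegrand c b a p) one_le_two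
    _ ≤ 2 * (B + B) := by gcongr
    _ = _ := by rw [hB]; ring

end FourierTrilinear

section SchwartzTrilinear

variable {V : Type*} [NormedAddCommGroup V] [InnerProductSpace ℝ V] [FiniteDimensional ℝ V]
  [MeasurableSpace V] [BorelSpace V]

theorem integrable_schwartz_mul_mul (F G H : 𝓢(V, ℂ)) : Integrable fun x => F x * G x * H x := by
  have hFG : Continuous fun x => F x * G x := F.continuous.mul G.continuous
  refine H.integrable.bdd_mul (c := SchwartzMap.seminorm ℝ 0 0 F * SchwartzMap.seminorm ℝ 0 0 G)
    hFG.aestronglyMeasurable (.of_forall fun x => ?_)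
  rw [norm_mul]
  gcongr <;> exact SchwartzMap.norm_le_seminorm ℝ _ x

theorem integrable_schwartz_mul_mul_neg_add (F G H : 𝓢(V, ℂ)) :
    Integrable fun p : V × V => F p.1 * G p.2 * H (-(p.1 + p.2)) :=
  (F.integrable.mul_prod G.integrable).mul_bdd (c := SchwartzMap.seminorm ℝ 0 0 H)
    (H.continuous.comp (by fun_prop)).aestronglyMeasurable
    (.of_forall fun _ => SchwartzMap.norm_le_seminorm ℝ H _)

theorem schwartz_eq_integral_fourierChar_smul (F : 𝓢(V, ℂ)) (x : V) :
    F x = ∫ ξ, 𝐞 (inner ℝ ξ x) • 𝓕 F ξ := by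
  rw [← Real.fourierInv_eq, ← SchwartzMap.fourierInv_coe, FourierTransform.fourierInv_fourier_eq]

theorem fourier_neg_add_eq_integral (H : 𝓢(V, ℂ)) (ξ η : V) :
    𝓕 H (-(ξ + η)) = ∫ x, 𝐞 (inner ℝ ξ x) • 𝐞 (inner ℝ η x) • H x := by
  rw [SchwartzMap.fourier_coe, Real.fourier_eq]
  refine integral_congr_ae (.of_forall fun x => ?_)
  simp only [smul_smul, ← AddChar.map_add_eq_mul, inner_neg_right, inner_add_right, neg_neg,
    real_inner_comm]

theorem integrable_fourierChar_smul_mul_mul (F G H : 𝓢(V, ℂ)) :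
    Integrable (fun q : V × V × V =>
      (𝐞 (inner ℝ q.2.1 q.1) • F q.2.1) * (𝐞 (inner ℝ q.2.2 q.1) • G q.2.2) * H q.1) := by
  have h := (H.integrable (μ := volume)).mul_prod
    ((F.integrable (μ := volume)).mul_prod (G.integrable (μ := volume)))
  refine h.mono (Continuous.aestronglyMeasurable ?_) (.of_forall fun q => le_of_eq ?_)
  · have : Continuous fun t : ℝ => (𝐞 t : ℂ) :=
      continuous_subtype_val.comp Real.continuous_fourierChar
    simp only [Circle.smul_def]
    have hF := F.continuous
    have hG := G.continuous
    have hH := H.continuous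
    fun_prop
  · simp only [norm_mul, Circle.norm_smul]
    ring

theorem integral_mul_mul_eq_fourier (F G H : 𝓢(V, ℂ)) :
    ∫ x, F x * G x * H x = ∫ p : V × V, 𝓕 F p.1 * 𝓕 G p.2 * 𝓕 H (-(p.1 + p.2)) := by
  have hinv (x : V) : F x * G x * H x = ∫ p : V × V,
      (𝐞 (inner ℝ p.1 x) • 𝓕 F p.1) * (𝐞 (inner ℝ p.2 x) • 𝓕 G p.2) * H x := by
    rw [integral_mul_const, Measure.volume_eq_prod,
      integral_prod_mul (fun ξ => 𝐞 (inner ℝ ξ x) • 𝓕 F ξ) (fun ξ => 𝐞 (inner ℝ ξ x) • 𝓕 G ξ),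
      ← schwartz_eq_integral_fourierChar_smul, ← schwartz_eq_integral_fourierChar_smul]
  simp only [hinv]
  rw [integral_integral_swap (integrable_fourierChar_smul_mul_mul (𝓕 F) (𝓕 G) H)]
  refine integral_congr_ae (.of_forall fun p => ?_)
  simp only [fourier_neg_add_eq_integral, ← integral_const_mul, Circle.smul_def, smul_eq_mul]
  refine integral_congr_ae (.of_forall fun x => ?_)
  ring

theorem fourier_lineDeriv_apply (f : 𝓢(V, ℂ)) (m ξ : V) :
    𝓕 (∂_{m} f) ξ = (2 * π * Complex.I) * (inner ℝ ξ m * 𝓕 f ξ) := by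
  have hinner : (inner ℝ · m : V → ℝ).HasTemperateGrowth := by fun_prop
  rw [SchwartzMap.fourier_lineDerivOp_eq, smul_apply,
    SchwartzMap.smulLeftCLM_apply_apply hinner, Complex.real_smul, smul_eq_mul]

theorem integrable_schwartz_norm_sq (f : 𝓢(V, ℂ)) : Integrable fun x => ‖f x‖ ^ 2 :=
  (f.memLp 2).integrable_norm_pow two_ne_zero

end SchwartzTrilinear

section WenteSchwartz

/-- The squared `L²` norm of the gradient of a Schwartz function on `ℂ`. -/
noncomputable def dirichletSq (f : 𝓢(ℂ, ℂ)) : ℝ :=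
  ∫ x, (‖∂_{(1 : ℂ)} f x‖ ^ 2 + ‖∂_{Complex.I} f x‖ ^ 2)

theorem dirichletSq_nonneg (f : 𝓢(ℂ, ℂ)) : 0 ≤ dirichletSq f :=
  integral_nonneg fun _ => by positivity

theorem norm_fourier_lineDeriv_sq_add (f : 𝓢(ℂ, ℂ)) (ξ : ℂ) :
    ‖𝓕 (∂_{(1 : ℂ)} f) ξ‖ ^ 2 + ‖𝓕 (∂_{Complex.I} f) ξ‖ ^ 2
      = 4 * π ^ 2 * (‖ξ‖ * ‖𝓕 f ξ‖) ^ 2 := by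
  have hξ : ‖ξ‖ ^ 2 = ξ.re ^ 2 + ξ.im ^ 2 := by
    rw [← Complex.normSq_eq_norm_sq, Complex.normSq_apply]
    ring
  simp only [fourier_lineDeriv_apply, norm_mul, Complex.norm_I, Complex.norm_real, Complex.inner,
    mul_pow, hξ]
  simp only [Complex.norm_ofNat, norm_eq_abs, sq_abs, one_pow, mul_one, one_mul, Complex.conj_re,
    Complex.mul_re, Complex.I_re, zero_mul, Complex.I_im, Complex.conj_im, mul_neg,
    sub_neg_eq_add, zero_add]
  ring

theorem ofReal_dirichletSq (f : 𝓢(ℂ, ℂ)) :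
    ENNReal.ofReal (dirichletSq f) = ENNReal.ofReal (4 * π ^ 2) * weightSq (‖𝓕 f ·‖ₑ) := by
  have hint : Integrable fun ξ =>
      ‖𝓕 (∂_{(1 : ℂ)} f) ξ‖ ^ 2 + ‖𝓕 (∂_{Complex.I} f) ξ‖ ^ 2 :=
    (integrable_schwartz_norm_sq (𝓕 (∂_{(1 : ℂ)} f))).add
    (integrable_schwartz_norm_sq (𝓕 (∂_{Complex.I} f)))
  have hplancherel : dirichletSq f
      = ∫ ξ, (‖𝓕 (∂_{(1 : ℂ)} f) ξ‖ ^ 2 + ‖𝓕 (∂_{Complex.I} f) ξ‖ ^ 2) := by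
    rw [dirichletSq, integral_add (integrable_schwartz_norm_sq _) (integrable_schwartz_norm_sq _),
      integral_add (integrable_schwartz_norm_sq _) (integrable_schwartz_norm_sq _),
      SchwartzMap.integral_norm_sq_fourier, SchwartzMap.integral_norm_sq_fourier]
  rw [hplancherel, ofReal_integral_eq_lintegral_ofReal hint (.of_forall fun ξ => by positivity),
    weightSq, ← lintegral_const_mul' _ _ ENNReal.ofReal_ne_top]
  refine lintegral_congr fun ξ => ?_
  rw [norm_fourier_lineDeriv_sq_add, ENNReal.ofReal_mul (by positivity),
    ENNReal.ofReal_pow (by positivity), ENNReal.ofReal_mul (norm_nonneg _), ofReal_norm,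
    ofReal_norm]

theorem integral_jacobian_mul_eq_fourier (f g h : 𝓢(ℂ, ℂ)) :
    ∫ x, (∂_{(1 : ℂ)} f x * ∂_{Complex.I} g x - ∂_{Complex.I} f x * ∂_{(1 : ℂ)} g x) * h x
      = -(4 * π ^ 2 : ℂ) * ∫ p : ℂ × ℂ, ((p.1.re * p.2.im - p.1.im * p.2.re : ℝ) : ℂ) *
        (𝓕 f p.1 * 𝓕 g p.2 * 𝓕 h (-(p.1 + p.2))) := by
  simp only [sub_mul]
  rw [integral_sub (integrable_schwartz_mul_mul _ _ _) (integrable_schwartz_mul_mul _ _ _),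
    integral_mul_mul_eq_fourier, integral_mul_mul_eq_fourier,
    ← integral_sub (integrable_schwartz_mul_mul_neg_add _ _ _)
      (integrable_schwartz_mul_mul_neg_add _ _ _), ← integral_const_mul]
  refine integral_congr_ae (.of_forall fun p => ?_)
  simp only [fourier_lineDeriv_apply, Complex.inner]
  simp only [one_mul, Complex.conj_re, Complex.mul_re, Complex.I_re, zero_mul, Complex.I_im,
    Complex.conj_im, mul_neg, sub_neg_eq_add, zero_add, neg_add_rev, Complex.ofReal_sub,
    Complex.ofReal_mul, neg_mul]
  linear_combination (4 * π ^ 2 * (p.1.re * p.2.im - p.1.im * p.2.re) *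
      (𝓕 f p.1 * 𝓕 g p.2 * 𝓕 h (-p.2 + -p.1)) : ℂ) * Complex.I_sq

theorem sq_enorm_integral_jacobian_mul_le (f g h : 𝓢(ℂ, ℂ)) :
    ‖∫ x, (∂_{(1 : ℂ)} f x * ∂_{Complex.I} g x - ∂_{Complex.I} f x * ∂_{(1 : ℂ)} g x) * h x‖ₑ ^ 2
      ≤ ENNReal.ofReal (4 * π ^ 2) ^ 2 * (4 * ENNReal.ofReal π *
        (weightSq (‖𝓕 f ·‖ₑ) * weightSq (‖𝓕 g ·‖ₑ) * weightSq (‖𝓕 h ·‖ₑ))) := by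
  have hconst : ‖-(4 * π ^ 2 : ℂ)‖ₑ = ENNReal.ofReal (4 * π ^ 2) := by
    rw [← ofReal_norm]
    simp
  have hreal (x : ℝ) : ‖(x : ℂ)‖ₑ = ‖x‖ₑ := by rw [← ofReal_norm, ← ofReal_norm, Complex.norm_real]
  have hform : ‖∫ p : ℂ × ℂ, ((p.1.re * p.2.im - p.1.im * p.2.re : ℝ) : ℂ) *
      (𝓕 f p.1 * 𝓕 g p.2 * 𝓕 h (-(p.1 + p.2)))‖ₑ
      ≤ ∫⁻ p, crossIntegrand (‖𝓕 f ·‖ₑ) (‖𝓕 g ·‖ₑ) (‖𝓕 h ·‖ₑ) p := by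
    refine (enorm_integral_le_lintegral_enorm _).trans_eq (lintegral_congr fun p => ?_)
    rw [crossIntegrand, enorm_mul, enorm_mul, enorm_mul, hreal]
  rw [integral_jacobian_mul_eq_fourier, enorm_mul, mul_pow, hconst]
  gcongr
  exact (pow_le_pow_left' hform 2).trans (sq_lintegral_crossIntegrand_le
    (𝓕 f).continuous.enorm.measurable (𝓕 g).continuous.enorm.measurable
    (𝓕 h).continuous.enorm.measurable)

theorem wente_schwartz (f g h : 𝓢(ℂ, ℂ)) :
    ‖∫ x, (∂_{(1 : ℂ)} f x * ∂_{Complex.I} g x - ∂_{Complex.I} f x * ∂_{(1 : ℂ)} g x) * h x‖ ^ 2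
      ≤ dirichletSq f * dirichletSq g * dirichletSq h := by
  have hfg := mul_nonneg (dirichletSq_nonneg f) (dirichletSq_nonneg g)
  have hpi : 4 * ENNReal.ofReal π ≤ ENNReal.ofReal (4 * π ^ 2) := by
    rw [← ENNReal.ofReal_ofNat 4, ← ENNReal.ofReal_mul (by norm_num)]
    exact ENNReal.ofReal_le_ofReal (by nlinarith [Real.pi_gt_three])
  rw [← ENNReal.ofReal_le_ofReal_iff (mul_nonneg hfg (dirichletSq_nonneg h)),
    ENNReal.ofReal_mul hfg, ENNReal.ofReal_mul (dirichletSq_nonneg f),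
    ENNReal.ofReal_pow (norm_nonneg _), ofReal_norm, ofReal_dirichletSq, ofReal_dirichletSq,
    ofReal_dirichletSq]
  calc _ ≤ _ := sq_enorm_integral_jacobian_mul_le f g h
    _ ≤ ENNReal.ofReal (4 * π ^ 2) ^ 2 * (ENNReal.ofReal (4 * π ^ 2) *
        (weightSq (‖𝓕 f ·‖ₑ) * weightSq (‖𝓕 g ·‖ₑ) * weightSq (‖𝓕 h ·‖ₑ))) := by gcongr
    _ = _ := by ring

end WenteSchwartz

section Wente

theorem exists_schwartz_lift {a : ℝ × ℝ → ℝ} (ha : ContDiff ℝ (⊤ : ℕ∞) a)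
    (hac : HasCompactSupport a) :
    ∃ f : 𝓢(ℂ, ℂ), ∀ z : ℂ, f z = a (Complex.equivRealProdCLM z) ∧
      ∂_{(1 : ℂ)} f z = pdx a (Complex.equivRealProdCLM z) ∧
      ∂_{Complex.I} f z = pdy a (Complex.equivRealProdCLM z) := by
  have hs : ContDiff ℝ (⊤ : ℕ∞) fun z : ℂ => (a (Complex.equivRealProdCLM z) : ℂ) :=
    Complex.ofRealCLM.contDiff.comp (ha.comp Complex.equivRealProdCLM.contDiff)
  have hk : HasCompactSupport fun z : ℂ => (a (Complex.equivRealProdCLM z) : ℂ) :=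
    (hac.comp_homeomorph Complex.equivRealProdCLM.toHomeomorph).comp_left
      (g := fun x : ℝ => (x : ℂ)) Complex.ofReal_zero
  have hderiv (z m : ℂ) : ∂_{m} (hk.toSchwartzMap hs) z
      = fderiv ℝ a (Complex.equivRealProdCLM z) (Complex.equivRealProdCLM m) := by
    have hd : HasFDerivAt (fun z : ℂ => (a (Complex.equivRealProdCLM z) : ℂ))
        (Complex.ofRealCLM.comp ((fderiv ℝ a (Complex.equivRealProdCLM z)).comp
          (Complex.equivRealProdCLM : ℂ →L[ℝ] ℝ × ℝ))) z :=
      Complex.ofRealCLM.hasFDerivAt.comp z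
        ((ha.differentiable (by simp) _).hasFDerivAt.comp z Complex.equivRealProdCLM.hasFDerivAt)
    rw [SchwartzMap.lineDerivOp_apply_eq_fderiv]
    exact congrArg (· m) hd.fderiv
  exact ⟨hk.toSchwartzMap hs, fun z => ⟨rfl, (hderiv z 1).trans (by simp [pdx]),
    (hderiv z Complex.I).trans (by simp [pdy])⟩⟩

theorem integral_comp_equivRealProdCLM {G : Type*} [NormedAddCommGroup G] [NormedSpace ℝ G]
    (F : ℝ × ℝ → G) : ∫ z : ℂ, F (Complex.equivRealProdCLM z) = ∫ p, F p :=
  Complex.volume_preserving_equiv_real_prod.integral_comp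
    Complex.measurableEquivRealProd.measurableEmbedding F

theorem dirichletSq_eq_integral {f : 𝓢(ℂ, ℂ)} {a : ℝ × ℝ → ℝ}
    (hf : ∀ z, f z = a (Complex.equivRealProdCLM z) ∧
      ∂_{(1 : ℂ)} f z = pdx a (Complex.equivRealProdCLM z) ∧
      ∂_{Complex.I} f z = pdy a (Complex.equivRealProdCLM z)) :
    dirichletSq f = ∫ p, (pdx a p ^ 2 + pdy a p ^ 2) := by
  rw [← integral_comp_equivRealProdCLM fun p => pdx a p ^ 2 + pdy a p ^ 2, dirichletSq]
  simp only [hf, Complex.norm_real, Real.norm_eq_abs, sq_abs]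

theorem wente_of_hasCompactSupport {a b c : ℝ × ℝ → ℝ}
    (ha : ContDiff ℝ (⊤ : ℕ∞) a) (hac : HasCompactSupport a)
    (hb : ContDiff ℝ (⊤ : ℕ∞) b) (hbc : HasCompactSupport b)
    (hc : ContDiff ℝ (⊤ : ℕ∞) c) (hcc : HasCompactSupport c) :
    (∫ p, jac a b p * c p) ^ 2 ≤ (∫ p, (pdx a p ^ 2 + pdy a p ^ 2)) *
      (∫ p, (pdx b p ^ 2 + pdy b p ^ 2)) * ∫ p, (pdx c p ^ 2 + pdy c p ^ 2) := by
  obtain ⟨f, hf⟩ := exists_schwartz_lift ha hac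
  obtain ⟨g, hg⟩ := exists_schwartz_lift hb hbc
  obtain ⟨h, hh⟩ := exists_schwartz_lift hc hcc
  have hjac : ∫ x, (∂_{(1 : ℂ)} f x * ∂_{Complex.I} g x - ∂_{Complex.I} f x * ∂_{(1 : ℂ)} g x) * h x
      = ((∫ p, jac a b p * c p : ℝ) : ℂ) := by
    rw [← integral_complex_ofReal, ← integral_comp_equivRealProdCLM]
    simp only [hf, hg, hh, jac, Complex.ofReal_mul, Complex.ofReal_sub]
  have hW := wente_schwartz f g h
  rwa [hjac, Complex.norm_real, Real.norm_eq_abs, sq_abs, dirichletSq_eq_integral hf,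
    dirichletSq_eq_integral hg, dirichletSq_eq_integral hh] at hW

theorem tendsto_gradsq_cutoff {D : Set (ℝ × ℝ)} (hD : IsOpen D) (hDb : Bornology.IsBounded D)
    {u : ℝ × ℝ → ℝ} (hu : ContDiff ℝ 1 u) (hu0 : ∀ p ∈ frontier D, u p = 0) :
    Tendsto (fun N => ∫ p, (pdx (cutoff D N u) p ^ 2 + pdy (cutoff D N u) p ^ 2)) atTop
      (𝓝 (gradsq D u)) :=
  tendsto_integral_comp_jet_cutoff volume hD hDb (u := fun _ : Unit => u) (fun _ => hu)
    (fun _ => hu0) (Φ := fun z => (z ()).1 (1, 0) ^ 2 + (z ()).1 (0, 1) ^ 2) (by fun_prop) (by simp)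

theorem tendsto_integral_jac_mul_cutoff {D : Set (ℝ × ℝ)} (hD : IsOpen D)
    (hDb : Bornology.IsBounded D) {a b c : ℝ × ℝ → ℝ}
    (ha : ContDiff ℝ 1 a) (hb : ContDiff ℝ 1 b) (hc : ContDiff ℝ 1 c)
    (ha0 : ∀ p ∈ frontier D, a p = 0) (hb0 : ∀ p ∈ frontier D, b p = 0)
    (hc0 : ∀ p ∈ frontier D, c p = 0) :
    Tendsto (fun N => ∫ p, jac (cutoff D N a) (cutoff D N b) p * cutoff D N c p) atTop
      (𝓝 (∫ p in D, jac a b p * c p)) :=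
  tendsto_integral_comp_jet_cutoff volume hD hDb (u := ![a, b, c])
    (by simp [Fin.forall_fin_succ, ha, hb, hc])
    (fun i => by fin_cases i; exacts [ha0, hb0, hc0])
    (Φ := fun z => ((z 0).1 (1, 0) * (z 1).1 (0, 1) - (z 0).1 (0, 1) * (z 1).1 (1, 0)) * (z 2).2)
    (by fun_prop) (by simp)

theorem wente {D : Set (ℝ × ℝ)} (hD : IsOpen D) (hDb : Bornology.IsBounded D)
    {a b c : ℝ × ℝ → ℝ} (ha : ContDiff ℝ (⊤ : ℕ∞) a) (hb : ContDiff ℝ (⊤ : ℕ∞) b)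
    (hc : ContDiff ℝ (⊤ : ℕ∞) c) (ha0 : ∀ p ∈ frontier D, a p = 0)
    (hb0 : ∀ p ∈ frontier D, b p = 0) (hc0 : ∀ p ∈ frontier D, c p = 0) :
    (∫ p in D, jac a b p * c p) ^ 2 ≤ gradsq D a * gradsq D b * gradsq D c := by
  have ha1 : ContDiff ℝ 1 a := ha.of_le (by simp)
  have hb1 : ContDiff ℝ 1 b := hb.of_le (by simp)
  have hc1 : ContDiff ℝ 1 c := hc.of_le (by simp)
  exact le_of_tendsto_of_tendsto'
    ((tendsto_integral_jac_mul_cutoff hD hDb ha1 hb1 hc1 ha0 hb0 hc0).pow 2)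
    (((tendsto_gradsq_cutoff hD hDb ha1 ha0).mul (tendsto_gradsq_cutoff hD hDb hb1 hb0)).mul
      (tendsto_gradsq_cutoff hD hDb hc1 hc0)) fun N =>
    wente_of_hasCompactSupport (contDiff_cutoff hD ha ha0 N) (hasCompactSupport_cutoff hDb N)
      (contDiff_cutoff hD hb hb0 N) (hasCompactSupport_cutoff hDb N)
      (contDiff_cutoff hD hc hc0 N) (hasCompactSupport_cutoff hDb N)

end Wente

section Calculus

variable {u v ψ : ℝ × ℝ → ℝ} {m n : WithTop ℕ∞}

theorem contDiff_pdx (hu : ContDiff ℝ n u) (hmn : m + 1 ≤ n) : ContDiff ℝ m (pdx u) :=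
  (hu.fderiv_right hmn).clm_apply contDiff_const

theorem contDiff_pdy (hu : ContDiff ℝ n u) (hmn : m + 1 ≤ n) : ContDiff ℝ m (pdy u) :=
  (hu.fderiv_right hmn).clm_apply contDiff_const

theorem continuous_pdx (hu : ContDiff ℝ 1 u) : Continuous (pdx u) :=
  (contDiff_pdx (m := 0) hu (by simp)).continuous

theorem continuous_pdy (hu : ContDiff ℝ 1 u) : Continuous (pdy u) :=
  (contDiff_pdy (m := 0) hu (by simp)).continuous

theorem continuous_lap (hu : ContDiff ℝ 2 u) : Continuous (lap u) :=
  (continuous_pdx (contDiff_pdx hu one_add_one_eq_two.le)).add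
    (continuous_pdy (contDiff_pdy hu one_add_one_eq_two.le))

theorem continuous_jac (hu : ContDiff ℝ 1 u) (hv : ContDiff ℝ 1 v) : Continuous (jac u v) :=
  ((continuous_pdx hu).mul (continuous_pdy hv)).sub ((continuous_pdy hu).mul (continuous_pdx hv))

theorem pdx_mul {p : ℝ × ℝ} (hu : DifferentiableAt ℝ u p) (hv : DifferentiableAt ℝ v p) :
    pdx (fun p => u p * v p) p = u p * pdx v p + v p * pdx u p := by
  simp [pdx, fderiv_fun_mul hu hv]

theorem pdy_mul {p : ℝ × ℝ} (hu : DifferentiableAt ℝ u p) (hv : DifferentiableAt ℝ v p) :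
    pdy (fun p => u p * v p) p = u p * pdy v p + v p * pdy u p := by
  simp [pdy, fderiv_fun_mul hu hv]

theorem pdx_sub (hu : Differentiable ℝ u) (hv : Differentiable ℝ v) :
    pdx (fun p => u p - v p) = fun p => pdx u p - pdx v p := by
  ext p
  simp [pdx, fderiv_fun_sub (hu p) (hv p)]

theorem pdy_sub (hu : Differentiable ℝ u) (hv : Differentiable ℝ v) :
    pdy (fun p => u p - v p) = fun p => pdy u p - pdy v p := by
  ext p
  simp [pdy, fderiv_fun_sub (hu p) (hv p)]

theorem lap_sub (hu : ContDiff ℝ 2 u) (hv : ContDiff ℝ 2 v) (p : ℝ × ℝ) :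
    lap (fun p => u p - v p) p = lap u p - lap v p := by
  have hdx {w : ℝ × ℝ → ℝ} (hw : ContDiff ℝ 2 w) : Differentiable ℝ (pdx w) :=
    (contDiff_pdx hw one_add_one_eq_two.le).differentiable one_ne_zero
  have hdy {w : ℝ × ℝ → ℝ} (hw : ContDiff ℝ 2 w) : Differentiable ℝ (pdy w) :=
    (contDiff_pdy hw one_add_one_eq_two.le).differentiable one_ne_zero
  have hu' := hu.differentiable two_ne_zero
  have hv' := hv.differentiable two_ne_zero
  simp only [lap, pdx_sub hu' hv', pdy_sub hu' hv', pdx_sub (hdx hu) (hdx hv),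
    pdy_sub (hdy hu) (hdy hv)]
  ring

theorem jac_sub_jac {ψ' v' : ℝ × ℝ → ℝ} (hψ : Differentiable ℝ ψ) (hψ' : Differentiable ℝ ψ')
    (hv : Differentiable ℝ v) (hv' : Differentiable ℝ v') (p : ℝ × ℝ) :
    jac ψ v p - jac ψ' v' p
      = jac ψ (fun p => v p - v' p) p + jac (fun p => ψ p - ψ' p) v' p := by
  simp only [jac, pdx_sub hψ hψ', pdy_sub hψ hψ', pdx_sub hv hv', pdy_sub hv hv']
  ring

theorem pdy_pdx_eq_pdx_pdy (hu : ContDiff ℝ 2 u) (p : ℝ × ℝ) :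
    pdy (pdx u) p = pdx (pdy u) p := by
  have hd : DifferentiableAt ℝ (fderiv ℝ u) p :=
    (hu.fderiv_right one_add_one_eq_two.le).differentiable one_ne_zero p
  have hsecond (v w : ℝ × ℝ) :
      fderiv ℝ (fun q => fderiv ℝ u q v) p w = fderiv ℝ (fderiv ℝ u) p w v := by
    simp [fderiv_clm_apply hd (differentiableAt_const v)]
  exact (hsecond _ _).trans
    (((hu.contDiffAt.isSymmSndFDerivAt (by simp)) _ _).trans (hsecond _ _).symm)

end Calculus

section Integrals

variable {D : Set (ℝ × ℝ)} {u v ψ : ℝ × ℝ → ℝ} {L : ℝ}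

theorem integrableOn_of_continuous {X : Type*} [MetricSpace X] [ProperSpace X]
    [MeasurableSpace X] [BorelSpace X] {μ : Measure X} [IsFiniteMeasureOnCompacts μ]
    {S : Set X} (hS : Bornology.IsBounded S) {f : X → ℝ} (hf : Continuous f) :
    IntegrableOn f S μ :=
  (hf.continuousOn.integrableOn_compact hS.isCompact_closure).mono_set subset_closure

theorem l2sq_nonneg (D : Set (ℝ × ℝ)) (u : ℝ × ℝ → ℝ) : 0 ≤ l2sq D u :=
  integral_nonneg fun _ => by positivity

theorem gradsq_nonneg (D : Set (ℝ × ℝ)) (u : ℝ × ℝ → ℝ) : 0 ≤ gradsq D u :=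
  integral_nonneg fun _ => by positivity

theorem l2sq_congr (hD : MeasurableSet D) (huv : ∀ p ∈ D, u p = v p) : l2sq D u = l2sq D v :=
  setIntegral_congr_fun hD fun p hp => by simp only [huv p hp]

theorem l2sq_add_le (hDb : Bornology.IsBounded D) (hu : Continuous u) (hv : Continuous v) :
    l2sq D (fun p => u p + v p) ≤ 2 * l2sq D u + 2 * l2sq D v := by
  have hint {f : ℝ × ℝ → ℝ} : Continuous f → IntegrableOn f D := integrableOn_of_continuous hDb
  rw [l2sq, l2sq, l2sq, ← integral_const_mul, ← integral_const_mul,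
    ← integral_add (hint (by fun_prop)) (hint (by fun_prop))]
  refine integral_mono (hint (by fun_prop)) (hint (by fun_prop)) fun p => ?_
  simp only
  linarith [add_sq_le (a := u p) (b := v p)]

theorem abs_two_mul_integral_mul_le (hDb : Bornology.IsBounded D) (hu : Continuous u)
    (hv : Continuous v) {c : ℝ} (hc : 0 < c) :
    |2 * ∫ p in D, u p * v p| ≤ c * l2sq D u + c⁻¹ * l2sq D v := by
  have hint {f : ℝ × ℝ → ℝ} : Continuous f → IntegrableOn f D := integrableOn_of_continuous hDb
  rw [l2sq, l2sq, ← integral_const_mul, ← integral_const_mul, ← integral_const_mul,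
    ← integral_add (hint (by fun_prop)) (hint (by fun_prop))]
  refine abs_integral_le_integral_abs.trans
    (integral_mono (hint (by fun_prop)) (hint (by fun_prop)) fun p => ?_)
  have hplus : 0 ≤ c⁻¹ * (c * u p + v p) ^ 2 := by positivity
  have hminus : 0 ≤ c⁻¹ * (c * u p - v p) ^ 2 := by positivity
  have hsq (σ : ℝ) (hσ : σ ^ 2 = 1) : c⁻¹ * (c * u p + σ * v p) ^ 2
      = c * u p ^ 2 + c⁻¹ * v p ^ 2 + σ * (2 * (u p * v p)) := by
    field_simp
    linear_combination v p ^ 2 * hσ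
  exact abs_le.2 ⟨by linarith [hsq 1 (by norm_num), hplus], by linarith [hsq (-1) (by norm_num)]⟩

theorem integral_mul_lap_eq_neg (hD : IsOpen D) (hDb : Bornology.IsBounded D)
    (hu : ContDiff ℝ 1 u) (hu0 : ∀ p ∈ frontier D, u p = 0) (hv : ContDiff ℝ 2 v) :
    ∫ p in D, u p * lap v p = -∫ p in D, (pdx u p * pdx v p + pdy u p * pdy v p) := by
  have hvx : ContDiff ℝ 1 (pdx v) := contDiff_pdx hv one_add_one_eq_two.le
  have hvy : ContDiff ℝ 1 (pdy v) := contDiff_pdy hv one_add_one_eq_two.le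
  have hint {f : ℝ × ℝ → ℝ} : Continuous f → IntegrableOn f D := integrableOn_of_continuous hDb
  have hx : ∫ p in D, pdx (fun p => u p * pdx v p) p = 0 :=
    setIntegral_fderiv_eq_zero volume hD hDb (hu.mul hvx) (fun p hp => by simp [hu0 p hp]) (1, 0)
  have hy : ∫ p in D, pdy (fun p => u p * pdy v p) p = 0 :=
    setIntegral_fderiv_eq_zero volume hD hDb (hu.mul hvy) (fun p hp => by simp [hu0 p hp]) (0, 1)
  have hdiv (p : ℝ × ℝ) : u p * lap v p + (pdx u p * pdx v p + pdy u p * pdy v p)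
      = pdx (fun p => u p * pdx v p) p + pdy (fun p => u p * pdy v p) p := by
    rw [pdx_mul (hu.differentiable one_ne_zero p) (hvx.differentiable one_ne_zero p),
      pdy_mul (hu.differentiable one_ne_zero p) (hvy.differentiable one_ne_zero p), lap]
    ring
  rw [eq_neg_iff_add_eq_zero, ← integral_add (hint (hu.continuous.fun_mul (continuous_lap hv)))
    (hint (((continuous_pdx hu).fun_mul hvx.continuous).fun_add
      ((continuous_pdy hu).fun_mul hvy.continuous)))]
  simp_rw [hdiv]
  rw [integral_add (hint (continuous_pdx (hu.mul hvx))) (hint (continuous_pdy (hu.mul hvy))),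
    hx, hy, add_zero]

theorem integral_mul_lap_self (hD : IsOpen D) (hDb : Bornology.IsBounded D)
    (hu : ContDiff ℝ 2 u) (hu0 : ∀ p ∈ frontier D, u p = 0) :
    ∫ p in D, u p * lap u p = -gradsq D u := by
  rw [integral_mul_lap_eq_neg hD hDb (hu.of_le one_le_two) hu0 hu]
  simp only [gradsq, sq]

theorem integral_jac_mul_self (hD : IsOpen D) (hDb : Bornology.IsBounded D)
    (hψ : ContDiff ℝ 2 ψ) (hu : ContDiff ℝ 1 u) (hu0 : ∀ p ∈ frontier D, u p = 0) :
    ∫ p in D, jac ψ u p * u p = 0 := by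
  have hψx : ContDiff ℝ 1 (pdx ψ) := contDiff_pdx hψ one_add_one_eq_two.le
  have hψy : ContDiff ℝ 1 (pdy ψ) := contDiff_pdy hψ one_add_one_eq_two.le
  have huu : ContDiff ℝ 1 fun p => u p * u p := hu.mul hu
  have hx : ∫ p in D, pdx (fun p => pdy ψ p * (u p * u p)) p = 0 :=
    setIntegral_fderiv_eq_zero volume hD hDb (hψy.mul huu) (fun p hp => by simp [hu0 p hp]) (1, 0)
  have hy : ∫ p in D, pdy (fun p => pdx ψ p * (u p * u p)) p = 0 :=
    setIntegral_fderiv_eq_zero volume hD hDb (hψx.mul huu) (fun p hp => by simp [hu0 p hp]) (0, 1)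
  have hdiv (p : ℝ × ℝ) : jac ψ u p * u p = 2⁻¹ * (pdy (fun p => pdx ψ p * (u p * u p)) p
      - pdx (fun p => pdy ψ p * (u p * u p)) p) := by
    have hd {w : ℝ × ℝ → ℝ} (hw : ContDiff ℝ 1 w) : DifferentiableAt ℝ w p :=
      hw.differentiable one_ne_zero p
    rw [pdx_mul (hd hψy) (hd huu), pdy_mul (hd hψx) (hd huu), pdx_mul (hd hu) (hd hu),
      pdy_mul (hd hu) (hd hu), pdy_pdx_eq_pdx_pdy hψ, jac]
    ring
  simp_rw [hdiv]
  rw [integral_const_mul, integral_sub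
    (integrableOn_of_continuous hDb (continuous_pdy (hψx.mul huu)))
    (integrableOn_of_continuous hDb (continuous_pdx (hψy.mul huu))), hx, hy, sub_zero, mul_zero]

theorem l2sq_pdx_le_gradsq (hDb : Bornology.IsBounded D) (hu : ContDiff ℝ 1 u) :
    l2sq D (pdx u) ≤ gradsq D u :=
  integral_mono (integrableOn_of_continuous hDb ((continuous_pdx hu).pow 2))
    (integrableOn_of_continuous hDb (((continuous_pdx hu).pow 2).add ((continuous_pdy hu).pow 2)))
    fun p => le_add_of_nonneg_right (sq_nonneg (pdy u p))

theorem l2sq_fst_mul_le (hD : MeasurableSet D) (hDb : Bornology.IsBounded D)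
    (hL : ∀ p ∈ D, |p.1| ≤ L) (hu : Continuous u) :
    l2sq D (fun p => p.1 * u p) ≤ L ^ 2 * l2sq D u := by
  rw [l2sq, l2sq, ← integral_const_mul]
  refine setIntegral_mono_on (integrableOn_of_continuous hDb (by fun_prop))
    (integrableOn_of_continuous hDb (by fun_prop)) hD fun p hp => ?_
  rw [mul_pow]
  exact mul_le_mul_of_nonneg_right (sq_le_sq.2 ((hL p hp).trans (le_abs_self L))) (sq_nonneg _)

theorem l2sq_le_gradsq (hD : IsOpen D) (hDb : Bornology.IsBounded D)
    (hL : ∀ p ∈ D, |p.1| ≤ L) (hu : ContDiff ℝ 1 u) (hu0 : ∀ p ∈ frontier D, u p = 0) :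
    l2sq D u ≤ 4 * L ^ 2 * gradsq D u := by
  have hux := continuous_pdx hu
  have hxux : Continuous fun p : ℝ × ℝ => p.1 * pdx u p := continuous_fst.mul hux
  have hparts : l2sq D u + 2 * ∫ p in D, u p * (p.1 * pdx u p) = 0 := by
    have hdiv : ∫ p in D, pdx (fun p => p.1 * (u p * u p)) p = 0 :=
      setIntegral_fderiv_eq_zero volume hD hDb (contDiff_fst.mul (hu.mul hu))
        (fun p hp => by simp [hu0 p hp]) (1, 0)
    have hd := hu.differentiable one_ne_zero
    have hpdx (p : ℝ × ℝ) : pdx (fun p => p.1 * (u p * u p)) p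
        = u p ^ 2 + 2 * (u p * (p.1 * pdx u p)) := by
      have hfst : pdx Prod.fst p = 1 := by simp [pdx, fderiv_fst]
      rw [pdx_mul differentiableAt_fst ((hd p).fun_mul (hd p)), pdx_mul (hd p) (hd p), hfst]
      ring
    simp_rw [hpdx] at hdiv
    rwa [integral_add (integrableOn_of_continuous hDb (hu.continuous.fun_pow 2))
      (integrableOn_of_continuous hDb (continuous_const.fun_mul (hu.continuous.fun_mul hxux))),
      integral_const_mul] at hdiv
  have hyoung := abs_two_mul_integral_mul_le hDb hu.continuous hxux (c := 2⁻¹) (by norm_num)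
  have hstrip := l2sq_fst_mul_le hD.measurableSet hDb hL hux
  have hgrad := mul_le_mul_of_nonneg_left (l2sq_pdx_le_gradsq hDb hu) (sq_nonneg L)
  linarith [neg_le_of_abs_le hyoung]

theorem gradsq_le_l2sq_lap (hD : IsOpen D) (hDb : Bornology.IsBounded D) (hL0 : 0 < L)
    (hL : ∀ p ∈ D, |p.1| ≤ L) (hu : ContDiff ℝ 2 u) (hu0 : ∀ p ∈ frontier D, u p = 0) :
    gradsq D u ≤ 4 * L ^ 2 * l2sq D (lap u) := by
  have hgreen := integral_mul_lap_self hD hDb hu hu0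
  have hyoung := abs_two_mul_integral_mul_le hDb hu.continuous (continuous_lap hu)
    (c := (4 * L ^ 2)⁻¹) (by positivity)
  have hpoincare : (4 * L ^ 2)⁻¹ * l2sq D u ≤ gradsq D u :=
    inv_mul_le_of_le_mul₀ (by positivity) (gradsq_nonneg D u)
      (l2sq_le_gradsq hD hDb hL (hu.of_le one_le_two) hu0)
  rw [hgreen, inv_inv] at hyoung
  linarith [neg_le_of_abs_le hyoung]

end Integrals

namespace SmoothField

variable {D : Set (ℝ × ℝ)} {u v : ℝ → ℝ × ℝ → ℝ}

theorem slice (hu : SmoothField u) (t : ℝ) : ContDiff ℝ (⊤ : ℕ∞) (u t) :=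
  ContDiff.comp (g := Function.uncurry u) hu (contDiff_prodMk_right t)

theorem contDiff_two (hu : SmoothField u) (t : ℝ) : ContDiff ℝ 2 (u t) :=
  mod_cast contDiff_infty.1 (hu.slice t) 2

theorem contDiff_time (hu : SmoothField u) (p : ℝ × ℝ) :
    ContDiff ℝ (⊤ : ℕ∞) fun t => u t p :=
  ContDiff.comp (g := Function.uncurry u) hu (contDiff_prodMk_left p)

theorem hasDerivAt_time (hu : SmoothField u) (t : ℝ) (p : ℝ × ℝ) :
    HasDerivAt (fun s => u s p) (deriv (fun s => u s p) t) t :=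
  ((hu.contDiff_time p).differentiable (by simp) t).hasDerivAt

theorem add (hu : SmoothField u) (hv : SmoothField v) : SmoothField fun t p => u t p + v t p :=
  ContDiff.add hu hv

theorem sub (hu : SmoothField u) (hv : SmoothField v) : SmoothField fun t p => u t p - v t p :=
  ContDiff.sub hu hv

theorem mul (hu : SmoothField u) (hv : SmoothField v) : SmoothField fun t p => u t p * v t p :=
  ContDiff.mul hu hv

theorem const_mul (c : ℝ) (hu : SmoothField u) : SmoothField fun t p => c * u t p :=
  ContDiff.mul contDiff_const hu

theorem pow (hu : SmoothField u) (n : ℕ) : SmoothField fun t p => u t p ^ n :=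
  ContDiff.pow hu n

theorem fderiv_apply (hu : SmoothField u) (e : ℝ × ℝ) :
    SmoothField fun t p => fderiv ℝ (u t) p e :=
  ContDiff.fderiv_apply (f := fun z : ℝ × ℝ × ℝ => u z.1) (g := fun z => z.2) (k := fun _ => e)
    (ContDiff.comp hu (by fun_prop : ContDiff ℝ (⊤ : ℕ∞) fun w : (ℝ × ℝ × ℝ) × ℝ × ℝ =>
      (w.1.1, w.2))) contDiff_snd contDiff_const (by simp)

theorem pdx (hu : SmoothField u) : SmoothField fun t => _root_.pdx (u t) :=
  hu.fderiv_apply (1, 0)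

theorem pdy (hu : SmoothField u) : SmoothField fun t => _root_.pdy (u t) :=
  hu.fderiv_apply (0, 1)

theorem deriv_time (hu : SmoothField u) : SmoothField fun t p => deriv (fun s => u s p) t :=
  ContDiff.fderiv_apply (f := fun (z : ℝ × ℝ × ℝ) s => u s z.2) (g := fun z => z.1)
    (k := fun _ => (1 : ℝ))
    (ContDiff.comp hu (by fun_prop : ContDiff ℝ (⊤ : ℕ∞) fun w : (ℝ × ℝ × ℝ) × ℝ =>
      (w.2, w.1.2))) contDiff_fst contDiff_const (by simp)

theorem lap (hu : SmoothField u) : SmoothField fun t => _root_.lap (u t) :=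
  hu.pdx.pdx.add hu.pdy.pdy

theorem jac (hu : SmoothField u) (hv : SmoothField v) :
    SmoothField fun t => _root_.jac (u t) (v t) :=
  (hu.pdx.mul hv.pdy).sub (hu.pdy.mul hv.pdx)

theorem hasDerivAt_setIntegral (hD : MeasurableSet D) (hDb : Bornology.IsBounded D)
    (hu : SmoothField u) (t : ℝ) :
    HasDerivAt (fun t => ∫ p in D, u t p) (∫ p in D, deriv (fun s => u s p) t) t := by
  have hK : IsCompact (Metric.closedBall t 1 ×ˢ closure D) :=
    (isCompact_closedBall t 1).prod hDb.isCompact_closure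
  obtain ⟨B, hB⟩ := hK.exists_bound_of_continuousOn
    (ContDiff.continuous hu.deriv_time).continuousOn
  refine (hasDerivAt_integral_of_dominated_loc_of_deriv_le (bound := fun _ => B)
    (F' := fun t p => deriv (fun s => u s p) t) (Metric.closedBall_mem_nhds t one_pos)
    (.of_forall fun s => (hu.slice s).continuous.aestronglyMeasurable)
    (integrableOn_of_continuous hDb (hu.slice t).continuous)
    (hu.deriv_time.slice t).continuous.aestronglyMeasurable ?_
    (integrableOn_of_continuous hDb continuous_const)
    (.of_forall fun p s _ => hu.hasDerivAt_time s p)).2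
  filter_upwards [ae_restrict_mem hD] with p hp s hs
  exact hB (s, p) ⟨hs, subset_closure hp⟩

theorem continuous_setIntegral (hD : MeasurableSet D) (hDb : Bornology.IsBounded D)
    (hu : SmoothField u) : Continuous fun t => ∫ p in D, u t p :=
  continuous_iff_continuousAt.2 fun t => (hu.hasDerivAt_setIntegral hD hDb t).continuousAt

theorem continuous_l2sq (hD : MeasurableSet D) (hDb : Bornology.IsBounded D)
    (hu : SmoothField u) : Continuous fun t => l2sq D (u t) :=
  (hu.pow 2).continuous_setIntegral hD hDb

theorem continuous_gradsq (hD : MeasurableSet D) (hDb : Bornology.IsBounded D)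
    (hu : SmoothField u) : Continuous fun t => gradsq D (u t) :=
  ((hu.pdx.pow 2).add (hu.pdy.pow 2)).continuous_setIntegral hD hDb

theorem hasDerivAt_l2sq (hD : MeasurableSet D) (hDb : Bornology.IsBounded D)
    (hu : SmoothField u) (t : ℝ) :
    HasDerivAt (fun t => l2sq D (u t)) (2 * ∫ p in D, u t p * deriv (fun s => u s p) t) t := by
  refine ((hu.pow 2).hasDerivAt_setIntegral hD hDb t).congr_deriv ?_
  rw [← integral_const_mul]
  congr 1 with p
  rw [((hu.hasDerivAt_time t p).fun_pow 2).deriv]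
  push_cast
  ring

end SmoothField

section Gronwall

theorem add_integral_le_exp_mul_of_deriv_le {E E' k h g : ℝ → ℝ} {a b : ℝ} (hab : a ≤ b)
    (hE : ∀ t, HasDerivAt E (E' t) t) (hk : Continuous k) (hh : Continuous h) (hg : Continuous g)
    (hk0 : ∀ t, 0 ≤ k t) (hh0 : ∀ t, 0 ≤ h t) (hg0 : ∀ t, 0 ≤ g t)
    (hle : ∀ t ∈ Set.Icc a b, E' t ≤ k t * E t + h t - g t) :
    E b + ∫ s in a..b, g s ≤ exp (∫ s in a..b, k s) * (E a + ∫ s in a..b, h s) := by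
  let y : ℝ → ℝ := fun t =>
    exp (-∫ s in a..t, k s) * (E t + ∫ s in a..t, g s) - ∫ s in a..t, h s
  have hy (t : ℝ) : HasDerivAt y (exp (-∫ s in a..t, k s) * -k t * (E t + ∫ s in a..t, g s)
      + exp (-∫ s in a..t, k s) * (E' t + g t) - h t) t :=
    ((hk.integral_hasStrictDerivAt a t).hasDerivAt.fun_neg.exp.mul
      ((hE t).fun_add (hg.integral_hasStrictDerivAt a t).hasDerivAt)).sub
      (hh.integral_hasStrictDerivAt a t).hasDerivAt
  have hanti : AntitoneOn y (Set.Icc a b) := by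
    refine antitoneOn_of_deriv_nonpos (convex_Icc a b)
      (fun t _ => (hy t).continuousAt.continuousWithinAt)
      (fun t _ => (hy t).differentiableAt.differentiableWithinAt) fun t ht => ?_
    rw [interior_Icc] at ht
    have hG : 0 ≤ ∫ s in a..t, g s := intervalIntegral.integral_nonneg ht.1.le fun s _ => hg0 s
    have hexp : exp (-∫ s in a..t, k s) ≤ 1 := exp_le_one_iff.2 <| neg_nonpos.2 <|
      intervalIntegral.integral_nonneg ht.1.le fun s _ => hk0 s
    rw [(hy t).deriv]
    calc _ = exp (-∫ s in a..t, k s) * (E' t + g t - k t * E t - k t * ∫ s in a..t, g s)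
          - h t := by ring
      _ ≤ exp (-∫ s in a..t, k s) * h t - h t := by
        gcongr
        linarith [hle t (Set.Ioo_subset_Icc_self ht), mul_nonneg (hk0 t) hG]
      _ ≤ 0 := sub_nonpos.2 (mul_le_of_le_one_left (hh0 t) hexp)
  have hyab := hanti (Set.left_mem_Icc.2 hab) (Set.right_mem_Icc.2 hab) hab
  simp only [y, intervalIntegral.integral_same, neg_zero, exp_zero, add_zero, sub_zero,
    one_mul] at hyab
  calc E b + ∫ s in a..b, g s
      = exp (∫ s in a..b, k s) * (exp (-∫ s in a..b, k s) * (E b + ∫ s in a..b, g s)) := by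
        rw [← mul_assoc, ← exp_add, add_neg_cancel, exp_zero, one_mul]
    _ ≤ _ := mul_le_mul_of_nonneg_left (sub_le_iff_le_add.1 hyab) (exp_pos _).le

theorem le_exp_mul_of_deriv_le {E E' k h : ℝ → ℝ} {a b t : ℝ} (ht : t ∈ Set.Icc a b)
    (hE : ∀ t, HasDerivAt E (E' t) t) (hk : Continuous k) (hh : Continuous h)
    (hk0 : ∀ t, 0 ≤ k t) (hh0 : ∀ t, 0 ≤ h t) (hE0 : 0 ≤ E a)
    (hle : ∀ t ∈ Set.Icc a b, E' t ≤ k t * E t + h t) :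
    E t ≤ exp (∫ s in a..b, k s) * (E a + ∫ s in a..b, h s) := by
  have hmono {w : ℝ → ℝ} (hw : Continuous w) (hw0 : ∀ t, 0 ≤ w t) :
      ∫ s in a..t, w s ≤ ∫ s in a..b, w s :=
    intervalIntegral.integral_mono_interval le_rfl ht.1 ht.2 (.of_forall hw0)
      (hw.intervalIntegrable _ _)
  have hgronwall := add_integral_le_exp_mul_of_deriv_le (g := fun _ => 0) ht.1 hE hk hh
    continuous_const hk0 hh0 (fun _ => le_rfl) fun s hs => by
      simpa using hle s ⟨hs.1, hs.2.trans ht.2⟩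
  rw [intervalIntegral.integral_zero, add_zero] at hgronwall
  have hforcing : 0 ≤ ∫ s in a..t, h s := intervalIntegral.integral_nonneg ht.1 fun s _ => hh0 s
  refine hgronwall.trans ?_
  gcongr
  exacts [hmono hk hk0, hmono hh hh0]

end Gronwall

section FixedTimeEnergy

variable {D : Set (ℝ × ℝ)} {L β ν r : ℝ} {v v' χ ψ N g : ℝ × ℝ → ℝ}

theorem integral_mul_tendency_eq (hD : IsOpen D) (hDb : Bornology.IsBounded D)
    (hv : ContDiff ℝ 2 v) (hχ : ContDiff ℝ 1 χ) (hψ : ContDiff ℝ 2 ψ) (hN : Continuous N)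
    (hg : Continuous g) (hv0 : ∀ p ∈ frontier D, v p = 0)
    (heq : ∀ p ∈ D, v' p + jac ψ v p + N p + β * pdx χ p = ν * lap v p - r * v p + g p) :
    ∫ p in D, v p * v' p = -(ν * gradsq D v) - r * l2sq D v - β * (∫ p in D, v p * pdx χ p)
      + (∫ p in D, v p * g p) - ∫ p in D, N p * v p := by
  have hvc := hv.continuous
  have hχx := continuous_pdx hχ
  have hlap := continuous_lap hv
  have hjac := continuous_jac (hψ.of_le one_le_two) (hv.of_le one_le_two)
  have hint {f : ℝ × ℝ → ℝ} : Continuous f → IntegrableOn f D := integrableOn_of_continuous hDb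
  have hexpand : ∫ p in D, v p * v' p = ν * (∫ p in D, v p * lap v p) - r * l2sq D v
      - β * (∫ p in D, v p * pdx χ p) + (∫ p in D, v p * g p) - (∫ p in D, N p * v p)
      - ∫ p in D, jac ψ v p * v p := by
    rw [l2sq, ← integral_const_mul, ← integral_const_mul, ← integral_const_mul,
      ← integral_sub (hint (by fun_prop)) (hint (by fun_prop)),
      ← integral_sub (hint (by fun_prop)) (hint (by fun_prop)),
      ← integral_add (hint (by fun_prop)) (hint (by fun_prop)),
      ← integral_sub (hint (by fun_prop)) (hint (by fun_prop)),
      ← integral_sub (hint (by fun_prop)) (hint (by fun_prop))]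
    exact setIntegral_congr_fun hD.measurableSet fun p hp => by
      linear_combination v p * heq p hp
  rw [hexpand, integral_mul_lap_self hD hDb hv hv0,
    integral_jac_mul_self hD hDb hψ (hv.of_le one_le_two) hv0]
  ring

/-- Growth rate of `‖v‖²` in the energy estimate on a domain in the strip `|x| ≤ L`. The `β`-term
is estimated by the Poincaré inequality, the additional forcing by Young's inequality. -/
noncomputable def energyRate (β r L : ℝ) : ℝ := 2 * |r| + |β| * (4 * L ^ 2 + 1) + 1

theorem energyRate_nonneg (β r L : ℝ) : 0 ≤ energyRate β r L := by
  unfold energyRate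
  positivity

theorem two_mul_integral_mul_tendency_le (hD : IsOpen D) (hDb : Bornology.IsBounded D)
    (hL0 : 0 < L) (hL : ∀ p ∈ D, |p.1| ≤ L) (hv : ContDiff ℝ 2 v) (hχ : ContDiff ℝ 2 χ)
    (hψ : ContDiff ℝ 2 ψ) (hN : Continuous N) (hg : Continuous g)
    (hv0 : ∀ p ∈ frontier D, v p = 0) (hχ0 : ∀ p ∈ frontier D, χ p = 0)
    (hχv : ∀ p ∈ D, v p = lap χ p)
    (heq : ∀ p ∈ D, v' p + jac ψ v p + N p + β * pdx χ p = ν * lap v p - r * v p + g p) :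
    2 * ∫ p in D, v p * v' p ≤ energyRate β r L * l2sq D v + l2sq D g
      - 2 * ν * gradsq D v - 2 * ∫ p in D, N p * v p := by
  have hχ1 : ContDiff ℝ 1 χ := hχ.of_le one_le_two
  have hforcing : 2 * ∫ p in D, v p * g p ≤ l2sq D v + l2sq D g := by
    simpa using (le_abs_self _).trans
      (abs_two_mul_integral_mul_le hDb hv.continuous hg one_pos)
  have hβ : -(β * (2 * ∫ p in D, v p * pdx χ p)) ≤ |β| * (4 * L ^ 2 + 1) * l2sq D v := by
    calc -(β * (2 * ∫ p in D, v p * pdx χ p))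
        ≤ |β| * |2 * ∫ p in D, v p * pdx χ p| := by
          rw [← abs_mul]
          exact neg_le_abs _
      _ ≤ |β| * (l2sq D v + gradsq D χ) := by
          gcongr
          simpa using (abs_two_mul_integral_mul_le hDb hv.continuous (continuous_pdx hχ1)
            one_pos).trans (add_le_add_right (mul_le_mul_of_nonneg_left
              (l2sq_pdx_le_gradsq hDb hχ1) (inv_nonneg.2 zero_le_one)) _)
      _ ≤ |β| * (l2sq D v + 4 * L ^ 2 * l2sq D v) := by
          gcongr
          rw [l2sq_congr hD.measurableSet hχv]
          exact gradsq_le_l2sq_lap hD hDb hL0 hL hχ hχ0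
      _ = |β| * (4 * L ^ 2 + 1) * l2sq D v := by ring
  have hr : -(r * l2sq D v) ≤ |r| * l2sq D v := by
    rw [← neg_mul]
    exact mul_le_mul_of_nonneg_right (neg_le_abs r) (l2sq_nonneg D v)
  rw [integral_mul_tendency_eq hD hDb hv hχ1 hψ hN hg hv0 heq, energyRate]
  linarith

theorem abs_two_mul_integral_jac_mul_le (hD : IsOpen D) (hDb : Bornology.IsBounded D)
    (hν : 0 < ν) {a b c : ℝ × ℝ → ℝ} (ha : ContDiff ℝ (⊤ : ℕ∞) a) (hb : ContDiff ℝ (⊤ : ℕ∞) b)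
    (hc : ContDiff ℝ (⊤ : ℕ∞) c) (ha0 : ∀ p ∈ frontier D, a p = 0)
    (hb0 : ∀ p ∈ frontier D, b p = 0) (hc0 : ∀ p ∈ frontier D, c p = 0) :
    |2 * ∫ p in D, jac a b p * c p|
      ≤ 2 * ν * gradsq D c + gradsq D a * gradsq D b / (2 * ν) := by
  have hab := mul_nonneg (gradsq_nonneg D a) (gradsq_nonneg D b)
  have hc2 := gradsq_nonneg D c
  refine abs_le_of_sq_le_sq ?_ (by positivity)
  calc (2 * ∫ p in D, jac a b p * c p) ^ 2
      = 4 * (∫ p in D, jac a b p * c p) ^ 2 := by ring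
    _ ≤ 4 * (gradsq D a * gradsq D b * gradsq D c) := by
      gcongr
      exact wente hD hDb ha hb hc ha0 hb0 hc0
    _ = 4 * (2 * ν * gradsq D c) * (gradsq D a * gradsq D b / (2 * ν)) := by
      field_simp
    _ ≤ (2 * ν * gradsq D c + gradsq D a * gradsq D b / (2 * ν)) ^ 2 :=
      four_mul_le_sq_add _ _

end FixedTimeEnergy

namespace SolvesBVE

variable {D : Set (ℝ × ℝ)} {L β ν r T t : ℝ} {f g q ψ Q Ψ R s F : ℝ → ℝ × ℝ → ℝ}

theorem exists_smoothField_forcing (hq : SmoothField q) (hψ : SmoothField ψ)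
    (hsol : SolvesBVE D β ν r q ψ f g) :
    ∃ F, SmoothField F ∧ ∀ t, 0 ≤ t → ∀ p ∈ D, F t p = f t p + g t p :=
  ⟨fun t p => deriv (fun s => q s p) t + jac (ψ t) (q t) p + β * pdx (ψ t) p - ν * lap (q t) p
      + r * q t p,
    (((hq.deriv_time.add (hψ.jac hq)).add (hψ.pdx.const_mul β)).sub (hq.lap.const_mul ν)).add
      (hq.const_mul r),
    fun t ht p hp => by linear_combination hsol.2.2 t ht p hp⟩

theorem two_mul_integral_mul_deriv_le (hD : IsOpen D) (hDb : Bornology.IsBounded D)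
    (hL0 : 0 < L) (hL : ∀ p ∈ D, |p.1| ≤ L) (hq : SmoothField q) (hψ : SmoothField ψ)
    (hF : SmoothField F) (hsol : SolvesBVE D β ν r q ψ f g) (ht : 0 ≤ t)
    (hFfg : ∀ p ∈ D, F t p = f t p + g t p) :
    2 * ∫ p in D, q t p * deriv (fun s => q s p) t
      ≤ energyRate β r L * l2sq D (q t) + l2sq D (F t) - 2 * ν * gradsq D (q t) := by
  obtain ⟨hlap, hbdry, heq⟩ := hsol
  simpa using two_mul_integral_mul_tendency_le hD hDb hL0 hL (hq.contDiff_two t)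
    (hψ.contDiff_two t) (hψ.contDiff_two t) (N := fun _ => 0) continuous_const
    (hF.contDiff_two t).continuous (fun p hp => (hbdry t ht p hp).1)
    (fun p hp => (hbdry t ht p hp).2) (hlap t ht)
    (v' := fun p => deriv (fun s => q s p) t) (β := β) (ν := ν) (r := r)
    fun p hp => by linear_combination heq t ht p hp - hFfg p hp

theorem integral_l2sq_forcing_le (hD : MeasurableSet D) (hDb : Bornology.IsBounded D)
    (hT : 0 ≤ T) (hg : SmoothField g) (hF : SmoothField F)
    (hFfg : ∀ t, 0 ≤ t → ∀ p ∈ D, F t p = f t p + g t p) :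
    ∫ t in 0..T, l2sq D (F t)
      ≤ 2 * (∫ t in 0..T, l2sq D (f t)) + 2 * ∫ t in 0..T, l2sq D (g t) := by
  have hf := hF.sub hg
  have hint {u : ℝ → ℝ × ℝ → ℝ} (hu : SmoothField u) (c : ℝ) :
      IntervalIntegrable (fun t => c * l2sq D (u t)) volume 0 T :=
    ((hu.continuous_l2sq hD hDb).const_mul c).intervalIntegrable _ _
  have hfF : ∫ t in 0..T, l2sq D (f t) = ∫ t in 0..T, l2sq D (fun p => F t p - g t p) :=
    intervalIntegral.integral_congr fun t ht => l2sq_congr hD fun p hp => by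
      rw [hFfg t (Set.uIcc_of_le hT ▸ ht).1 p hp, add_sub_cancel_right]
  rw [hfF, ← intervalIntegral.integral_const_mul, ← intervalIntegral.integral_const_mul,
    ← intervalIntegral.integral_add (hint hf 2) (hint hg 2)]
  refine intervalIntegral.integral_mono hT
    ((hF.continuous_l2sq hD hDb).intervalIntegrable _ _) ((hint hf 2).add (hint hg 2)) fun t => ?_
  simpa using l2sq_add_le hDb (hf.slice t).continuous (hg.slice t).continuous

theorem integral_gradsq_le (hD : IsOpen D) (hDb : Bornology.IsBounded D)
    (hL0 : 0 < L) (hL : ∀ p ∈ D, |p.1| ≤ L) (hν : 0 < ν) (hT : 0 ≤ T)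
    (hq : SmoothField q) (hψ : SmoothField ψ) (hg : SmoothField g)
    (hsol : SolvesBVE D β ν r q ψ f g) :
    ∫ t in 0..T, gradsq D (q t) ≤ exp (energyRate β r L * T) / (2 * ν) * (l2sq D (q 0)
      + (2 * (∫ t in 0..T, l2sq D (f t)) + 2 * ∫ t in 0..T, l2sq D (g t))) := by
  have hDm := hD.measurableSet
  obtain ⟨F, hF, hFfg⟩ := hsol.exists_smoothField_forcing hq hψ
  have hgronwall := add_integral_le_exp_mul_of_deriv_le hT
    (k := fun _ => energyRate β r L) (g := fun t => 2 * ν * gradsq D (q t))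
    (hq.hasDerivAt_l2sq hDm hDb) continuous_const (hF.continuous_l2sq hDm hDb)
    ((hq.continuous_gradsq hDm hDb).const_mul _) (fun _ => energyRate_nonneg β r L)
    (fun _ => l2sq_nonneg _ _) (fun _ => mul_nonneg (by positivity) (gradsq_nonneg _ _))
    fun t ht => two_mul_integral_mul_deriv_le hD hDb hL0 hL hq hψ hF hsol ht.1 (hFfg t ht.1)
  rw [intervalIntegral.integral_const_mul, intervalIntegral.integral_const, sub_zero,
    smul_eq_mul, mul_comm T] at hgronwall
  rw [div_mul_eq_mul_div, le_div_iff₀' (by positivity)]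
  refine (le_of_add_le_of_nonneg_right hgronwall (l2sq_nonneg D (q T))).trans ?_
  gcongr
  exact integral_l2sq_forcing_le hDm hDb hT hg hF hFfg

theorem difference_equation (hq : SmoothField q) (hψ : SmoothField ψ) (hQ : SmoothField Q)
    (hΨ : SmoothField Ψ) (hsol : SolvesBVE D β ν r q ψ f R) (hsol' : SolvesBVE D β ν r Q Ψ f s)
    (ht : 0 ≤ t) {p : ℝ × ℝ} (hp : p ∈ D) :
    deriv (fun s => q s p - Q s p) t + jac (ψ t) (fun p => q t p - Q t p) p
      + jac (fun p => ψ t p - Ψ t p) (Q t) p + β * pdx (fun p => ψ t p - Ψ t p) p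
      = ν * lap (fun p => q t p - Q t p) p - r * (q t p - Q t p) + (R t p - s t p) := by
  have hd {u : ℝ → ℝ × ℝ → ℝ} (hu : SmoothField u) : Differentiable ℝ (u t) :=
    (hu.contDiff_two t).differentiable two_ne_zero
  rw [((hq.hasDerivAt_time t p).fun_sub (hQ.hasDerivAt_time t p)).deriv,
    lap_sub (hq.contDiff_two t) (hQ.contDiff_two t), pdx_sub (hd hψ) (hd hΨ)]
  linear_combination hsol.2.2 t ht p hp - hsol'.2.2 t ht p hp
    - jac_sub_jac (hd hψ) (hd hΨ) (hd hq) (hd hQ) p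

theorem two_mul_integral_sub_mul_deriv_le (hD : IsOpen D) (hDb : Bornology.IsBounded D)
    (hL0 : 0 < L) (hL : ∀ p ∈ D, |p.1| ≤ L) (hν : 0 < ν) (hq : SmoothField q)
    (hψ : SmoothField ψ) (hQ : SmoothField Q) (hΨ : SmoothField Ψ) (hF : SmoothField F)
    (hsol : SolvesBVE D β ν r q ψ f R) (hsol' : SolvesBVE D β ν r Q Ψ f s) (ht : 0 ≤ t)
    (hFRs : ∀ p ∈ D, F t p = R t p - s t p) :
    2 * ∫ p in D, (q t p - Q t p) * deriv (fun s => q s p - Q s p) t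
      ≤ (energyRate β r L + 2 * L ^ 2 / ν * gradsq D (Q t)) * l2sq D (fun p => q t p - Q t p)
        + l2sq D (F t) := by
  have hw := hq.sub hQ
  have hφ := hψ.sub hΨ
  have hw0 (p) (hp : p ∈ frontier D) : q t p - Q t p = 0 := by
    rw [(hsol.2.1 t ht p hp).1, (hsol'.2.1 t ht p hp).1, sub_zero]
  have hφ0 (p) (hp : p ∈ frontier D) : ψ t p - Ψ t p = 0 := by
    rw [(hsol.2.1 t ht p hp).2, (hsol'.2.1 t ht p hp).2, sub_zero]
  have hφw (p) (hp : p ∈ D) : q t p - Q t p = lap (fun p => ψ t p - Ψ t p) p := by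
    rw [lap_sub (hψ.contDiff_two t) (hΨ.contDiff_two t), hsol.1 t ht p hp, hsol'.1 t ht p hp]
  have henergy := two_mul_integral_mul_tendency_le hD hDb hL0 hL (hw.contDiff_two t)
    (hφ.contDiff_two t) (hψ.contDiff_two t)
    ((hφ.jac hQ).slice t).continuous (hF.contDiff_two t).continuous hw0 hφ0 hφw
    fun p hp => (hFRs p hp).symm ▸ difference_equation hq hψ hQ hΨ hsol hsol' ht hp
  have hwente := abs_two_mul_integral_jac_mul_le hD hDb hν (hφ.slice t) (hQ.slice t)
    (hw.slice t) hφ0 (fun p hp => (hsol'.2.1 t ht p hp).1) hw0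
  have hgrad : gradsq D (fun p => ψ t p - Ψ t p) * gradsq D (Q t) / (2 * ν)
      ≤ 2 * L ^ 2 / ν * gradsq D (Q t) * l2sq D (fun p => q t p - Q t p) := by
    calc _ ≤ 4 * L ^ 2 * l2sq D (fun p => q t p - Q t p) * gradsq D (Q t) / (2 * ν) := by
          gcongr
          · exact gradsq_nonneg _ _
          · rw [l2sq_congr hD.measurableSet hφw]
            exact gradsq_le_l2sq_lap hD hDb hL0 hL (hφ.contDiff_two t) hφ0
      _ = _ := by field_simp; ring
  linarith [neg_le_of_abs_le hwente]

theorem l2sq_sub_le (hD : IsOpen D) (hDb : Bornology.IsBounded D)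
    (hL0 : 0 < L) (hL : ∀ p ∈ D, |p.1| ≤ L) (hν : 0 < ν) (hq : SmoothField q)
    (hψ : SmoothField ψ) (hQ : SmoothField Q) (hΨ : SmoothField Ψ)
    (hsol : SolvesBVE D β ν r q ψ f R) (hsol' : SolvesBVE D β ν r Q Ψ f s)
    (ht : t ∈ Set.Icc 0 T) :
    l2sq D (fun p => q t p - Q t p)
      ≤ exp (energyRate β r L * T + 2 * L ^ 2 / ν * ∫ t in 0..T, gradsq D (Q t)) *
        (l2sq D (fun p => q 0 p - Q 0 p) + ∫ t in 0..T, l2sq D (fun p => R t p - s t p)) := by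
  have hDm := hD.measurableSet
  obtain ⟨G, hG, hGR⟩ := hsol.exists_smoothField_forcing hq hψ
  obtain ⟨H, hH, hHs⟩ := hsol'.exists_smoothField_forcing hQ hΨ
  have hF (t) (ht : 0 ≤ t) (p) (hp : p ∈ D) : G t p - H t p = R t p - s t p := by
    rw [hGR t ht p hp, hHs t ht p hp, add_sub_add_left_eq_sub]
  have hrate : Continuous fun t => 2 * L ^ 2 / ν * gradsq D (Q t) :=
    (hQ.continuous_gradsq hDm hDb).const_mul _
  have hgronwall := le_exp_mul_of_deriv_le ht
    ((hq.sub hQ).hasDerivAt_l2sq hDm hDb) (continuous_const.fun_add hrate)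
    ((hG.sub hH).continuous_l2sq hDm hDb)
    (fun t => add_nonneg (energyRate_nonneg β r L)
      (mul_nonneg (by positivity) (gradsq_nonneg D (Q t))))
    (fun _ => l2sq_nonneg _ _) (l2sq_nonneg _ _) fun t ht =>
      two_mul_integral_sub_mul_deriv_le hD hDb hL0 hL hν hq hψ hQ hΨ (hG.sub hH) hsol hsol' ht.1
        (hF t ht.1)
  have hforcing : ∫ t in 0..T, l2sq D (fun p => G t p - H t p)
      = ∫ t in 0..T, l2sq D (fun p => R t p - s t p) :=
    intervalIntegral.integral_congr fun τ hτ =>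
      l2sq_congr hDm (hF τ (Set.uIcc_of_le (ht.1.trans ht.2) ▸ hτ).1)
  rwa [hforcing, intervalIntegral.integral_add
    (continuous_const.intervalIntegrable _ _) (hrate.intervalIntegrable _ _),
    intervalIntegral.integral_const_mul, intervalIntegral.integral_const, sub_zero, smul_eq_mul,
    mul_comm T] at hgronwall

end SolvesBVE

theorem pathwise_approximation_general {D : Set (ℝ × ℝ)} (hD : IsOpen D)
    (hDb : Bornology.IsBounded D) (β : ℝ) {ν : ℝ} (hν : 0 < ν) (r T : ℝ)
    (fbar : ℝ → ℝ × ℝ → ℝ) (A M : ℝ) :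
    ∃ C > 0, ∀ qbar ψbar Q Ψ R s : ℝ → ℝ × ℝ → ℝ,
      SmoothField qbar → SmoothField ψbar → SmoothField Q → SmoothField Ψ → SmoothField s →
      SolvesBVE D β ν r qbar ψbar fbar R → SolvesBVE D β ν r Q Ψ fbar s →
      l2sq D (Q 0) ≤ A → (∫ t in (0:ℝ)..T, l2sq D (s t)) ≤ M →
      ∀ t ∈ Set.Icc (0:ℝ) T, l2sq D (fun p => qbar t p - Q t p) ≤
        C * (l2sq D (fun p => qbar 0 p - Q 0 p)
          + ∫ t in (0:ℝ)..T, l2sq D (fun p => R t p - s t p)) := by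
  obtain ⟨L, hL0, hDL⟩ := hDb.exists_pos_norm_le
  have hL : ∀ p ∈ D, |p.1| ≤ L := fun p hp => (norm_fst_le p).trans (hDL p hp)
  refine ⟨exp (energyRate β r L * T + 2 * L ^ 2 / ν * (exp (energyRate β r L * T) / (2 * ν) *
    (A + (2 * (∫ t in (0:ℝ)..T, l2sq D (fbar t)) + 2 * M)))), exp_pos _, ?_⟩
  intro qbar ψbar Q Ψ R s hq hψ hQ hΨ hs hsol hsol' hA hM t ht
  have hR : 0 ≤ ∫ t in (0:ℝ)..T, l2sq D (fun p => R t p - s t p) :=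
    intervalIntegral.integral_nonneg (ht.1.trans ht.2) fun _ _ => l2sq_nonneg _ _
  refine (hsol.l2sq_sub_le hD hDb hL0 hL hν hq hψ hQ hΨ hsol' ht).trans ?_
  gcongr
  · exact add_nonneg (l2sq_nonneg _ _) hR
  · refine (hsol'.integral_gradsq_le hD hDb hL0 hL hν (ht.1.trans ht.2) hQ hΨ hs).trans ?_
    gcongr

/-- deterministic/pathwise form of Theorem 1(i).
Fix `T > 0`. Let `q̄` solve the filtered equation with forcing `f̄` and SGS term `R`,
and `Q` solve the same equation with forcing `f̄` and parameterization term `s`,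
both with zero boundary conditions and the same initial datum `q̄₀`, where
`∫₀ᵀ ‖s(t)‖² dt ≤ M`. Then there is a constant `C = C(ν, r, q̄₀, T, M, f̄) > 0`
such that for all `0 ≤ t ≤ T`,
`‖q̄(t) - Q(t)‖² ≤ C ∫₀ᵀ ‖R(t) - s(t)‖² dt`. -/
theorem pathwise_approximation
    (D : Set (ℝ × ℝ)) (hD : IsOpen D) (hDb : Bornology.IsBounded D)
    (β ν r : ℝ) (hν : 0 < ν) (hr : 0 < r)
    (T : ℝ) (hT : 0 < T)
    (qbar₀ : ℝ × ℝ → ℝ) (fbar : ℝ → ℝ × ℝ → ℝ)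
    (hfbar : MeanSquareIntegrable D fbar)
    (M : ℝ) (hM : 0 < M) :
    ∃ C > 0,
      ∀ qbar ψbar Q Ψ R s : ℝ → ℝ × ℝ → ℝ,
        SmoothField qbar → SmoothField ψbar → SmoothField Q → SmoothField Ψ →
        SmoothField R → SmoothField s →
        SolvesBVE D β ν r qbar ψbar fbar R →
        SolvesBVE D β ν r Q Ψ fbar s →
        qbar 0 = qbar₀ → Q 0 = qbar₀ →
        (∫ t in (0:ℝ)..T, l2sq D (s t)) ≤ M →
        ∀ t ∈ Set.Icc (0:ℝ) T,
          l2sq D (fun p => qbar t p - Q t p) ≤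
            C * ∫ t in (0:ℝ)..T, l2sq D (fun p => R t p - s t p) := by
  obtain ⟨C, hC, hbound⟩ := pathwise_approximation_general hD hDb β hν r T fbar (l2sq D qbar₀) M
  refine ⟨C, hC, fun qbar ψbar Q Ψ R s hq hψ hQ hΨ _ hs hsol hsol' hq0 hQ0 hM t ht => ?_⟩
  simpa [hq0, hQ0, l2sq] using
    hbound qbar ψbar Q Ψ R s hq hψ hQ hΨ hs hsol hsol' (by rw [hQ0]) hM t ht
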